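/- For every 0 < τ < √2, every c₀ > 0, and every ε > 0, there exists d₀ such that for all d ≥ d₀ and every measurable subset A ⊆ S^{d−1} with c₀ ≤ μ(A) ≤ 1/2, the following holds: Pr_{u,v ~ μ, independent}[ v ∈ A ∣ u ∈ A and ‖u − v‖ ≤ τ ] ≤ Λ(τ, Φ_c^{−1}(μ(A))) + ε, where μ is the normalized uniform measure on S^{d−1}; moreover, equality up to ε is attained when A is a spherical cap of measure μ(A). -/

import Mathlib

open MeasureTheory ProbabilityTheory Real

noncomputable section

/-- The normalized uniform (Haar) measure on the unit sphere `S^{d-1} ⊆ ℝ^d`. -/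
def sphereMeasure (d : ℕ) : Measure (Metric.sphere (0 : EuclideanSpace ℝ (Fin d)) 1) :=
  ((volume : Measure (EuclideanSpace ℝ (Fin d))).toSphere Set.univ)⁻¹
    • (volume : Measure (EuclideanSpace ℝ (Fin d))).toSphere

/-- `Φ_c(η) = Pr_{X ~ N(0,1)}[X ≥ η]`. -/
def gaussTail (η : ℝ) : ℝ := (gaussianReal 0 1 (Set.Ici η)).toReal

/-- `Λ(τ, η) = Pr[X ≥ η ∧ (1 - τ²/2)X + √(τ² - τ⁴/4)·Y ≥ η] / Φ_c(η)` for independent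
standard Gaussians `X, Y`. -/
def lambdaFn (τ η : ℝ) : ℝ :=
  (((gaussianReal 0 1).prod (gaussianReal 0 1))
      {z : ℝ × ℝ | η ≤ z.1 ∧
        η ≤ (1 - τ ^ 2 / 2) * z.1 + Real.sqrt (τ ^ 2 - τ ^ 4 / 4) * z.2}).toReal
    / gaussTail η

/-- The conditional probability `Pr_{u,v ~ μ}[v ∈ A ∣ u ∈ A, ‖u - v‖ ≤ τ]`. -/
def condCollision (d : ℕ) (A : Set (Metric.sphere (0 : EuclideanSpace ℝ (Fin d)) 1))
    (τ : ℝ) : ℝ :=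
  (((sphereMeasure d).prod (sphereMeasure d))
      {uv | uv.2 ∈ A ∧ uv.1 ∈ A ∧ dist uv.1 uv.2 ≤ τ}).toReal
    / (((sphereMeasure d).prod (sphereMeasure d)) {uv | uv.1 ∈ A ∧ dist uv.1 uv.2 ≤ τ}).toReal

/-!
Moving the larger of the values of a function at two mirror images to one side of the mirror does
not lower the number of close pairs, because a point is closer to a point on its own side than to
the mirror image of that point. Among all Lipschitz functions obtained in this way from an
approximate indicator of `A`, and their limits, one maximizes the moment `∫ ⟪e, x⟫ f x` by
Arzelà–Ascoli. No mirror can raise its moment further, so it increases with `⟪e, x⟫`, and a cap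
nearly as large as `A` has nearly as many close pairs.

The close pairs of a cap are counted by averaging over a Gaussian vector `g` in place of its
direction. Almost all pairs at distance at most `τ` have inner product close to `1 - τ² / 2`, so
`⟪u, g⟫` and `⟪v, g⟫` are standard Gaussians with nearly that correlation, while `‖g‖` is nearly
`√d`; this produces the Gaussian probability in `Λ`.
-/

/-! ### Two-point symmetrization -/

section Involution

variable {X : Type*} [MeasurableSpace X] {μ : Measure X} {σ : X → X}

lemma integral_comp_involutive (hσ : Function.Involutive σ) (hμ : MeasurePreserving σ μ μ)
    (f : X → ℝ) : ∫ x, f (σ x) ∂μ = ∫ x, f x ∂μ :=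
  hμ.integral_comp (MeasurableEquiv.ofInvolutive σ hσ hμ.measurable).measurableEmbedding f

lemma integral_add_comp_involutive (hσ : Function.Involutive σ) (hμ : MeasurePreserving σ μ μ)
    {f : X → ℝ} (hf : Integrable f μ) : ∫ x, (f + f ∘ σ) x ∂μ = 2 * ∫ x, f x ∂μ := by
  rw [integral_add' hf (hμ.integrable_comp_of_integrable hf)]
  simp only [Function.comp_apply, integral_comp_involutive hσ hμ, two_mul]

end Involution

/-- A measure-preserving isometric involution of a metric measure space, together with a function
`height` whose sign tells the two sides of the mirror apart: exchanging two points between the sides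
negates `height`, and points on the same side are closer to each other than to each other's mirror
images. -/
structure Polarization {X : Type*} [MetricSpace X] [MeasurableSpace X] (μ : Measure X) where
  refl : X → X
  height : X → ℝ
  involutive : Function.Involutive refl
  isometry : Isometry refl
  measurePreserving : MeasurePreserving refl μ μ
  height_refl : ∀ x, height (refl x) = -height x
  dist_le_dist_refl : ∀ x y, 0 ≤ height x → 0 ≤ height y → dist x y ≤ dist x (refl y)

/-- The density of the pair energy `∬ K (dist x y) f x f y` of `f` with respect to the distance
kernel `K`. -/
def pairDensity {X : Type*} [Dist X] (K : ℝ → ℝ) (f : X → ℝ) (z : X × X) : ℝ :=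
  K (dist z.1 z.2) * (f z.1 * f z.2)

/-- The pair energy `∬ K (dist x y) f x f y ∂μ ∂μ`. For `K` the indicator of `(-∞, τ]` and `f` that
of a set, it is the measure of the pairs of points of the set at distance at most `τ`. -/
def pairEnergy {X : Type*} [Dist X] [MeasurableSpace X] (μ : Measure X) (K : ℝ → ℝ) (f : X → ℝ) :
    ℝ :=
  ∫ z, pairDensity K f z ∂(μ.prod μ)

namespace Polarization

open scoped NNReal

variable {X : Type*} [MetricSpace X] [MeasurableSpace X] {μ : Measure X} (P : Polarization μ)
  {f : X → ℝ} {K : ℝ → ℝ} {x y : X}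

lemma refl_eq_self (hx : P.height x = 0) : P.refl x = x := by
  have h := P.dist_le_dist_refl (P.refl x) x (by rw [P.height_refl, hx, neg_zero]) hx.ge
  rwa [dist_self, dist_le_zero] at h

lemma height_refl_nonneg (hx : P.height x ≤ 0) : 0 ≤ P.height (P.refl x) := by
  rw [P.height_refl]
  exact neg_nonneg.2 hx

lemma dist_refl_left (x y : X) : dist (P.refl x) y = dist x (P.refl y) := by
  rw [← P.isometry.dist_eq, P.involutive]

/-- The two-point rearrangement of `f`: on each pair of mirror images, the larger of the two values
is moved to the side of nonnegative height. -/
def polarize (f : X → ℝ) (x : X) : ℝ :=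
  if 0 ≤ P.height x then max (f x) (f (P.refl x)) else min (f x) (f (P.refl x))

lemma polarize_of_nonneg (f : X → ℝ) (hx : 0 ≤ P.height x) :
    P.polarize f x = max (f x) (f (P.refl x)) := if_pos hx

lemma polarize_of_nonpos (f : X → ℝ) (hx : P.height x ≤ 0) :
    P.polarize f x = min (f x) (f (P.refl x)) := by
  rcases hx.eq_or_lt with h | h
  · rw [P.polarize_of_nonneg f h.ge, P.refl_eq_self h, max_self, min_self]
  · exact if_neg h.not_ge

lemma polarize_refl_of_nonneg (f : X → ℝ) (hx : 0 ≤ P.height x) :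
    P.polarize f (P.refl x) = min (f x) (f (P.refl x)) := by
  rw [P.polarize_of_nonpos f (by rwa [P.height_refl, neg_nonpos]), P.involutive, min_comm]

lemma polarize_mem {s : Set ℝ} (hf : ∀ x, f x ∈ s) (x : X) : P.polarize f x ∈ s := by
  unfold polarize
  split_ifs
  · exact max_rec' (· ∈ s) (hf _) (hf _)
  · exact min_rec' (· ∈ s) (hf _) (hf _)

lemma comp_polarize_add_comp_polarize_refl (φ : ℝ → ℝ) (f : X → ℝ) (x : X) :
    φ (P.polarize f x) + φ (P.polarize f (P.refl x)) = φ (f x) + φ (f (P.refl x)) := by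
  wlog hx : 0 ≤ P.height x generalizing x
  · have h := this (P.refl x) (P.height_refl_nonneg (not_le.1 hx).le)
    rw [P.involutive] at h
    rw [add_comm, h, add_comm]
  rw [P.polarize_of_nonneg f hx, P.polarize_refl_of_nonneg f hx]
  rcases le_total (f x) (f (P.refl x)) with h | h
  · rw [max_eq_right h, min_eq_left h, add_comm]
  · rw [max_eq_left h, min_eq_right h]

lemma integral_comp_polarize {φ : ℝ → ℝ} (hf : Integrable (fun x ↦ φ (f x)) μ)
    (hpf : Integrable (fun x ↦ φ (P.polarize f x)) μ) :
    ∫ x, φ (P.polarize f x) ∂μ = ∫ x, φ (f x) ∂μ := by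
  have h := integral_add_comp_involutive P.involutive P.measurePreserving hf
  have hp := integral_add_comp_involutive P.involutive P.measurePreserving hpf
  simp only [Pi.add_apply, Function.comp_apply] at h hp
  simp_rw [P.comp_polarize_add_comp_polarize_refl] at hp
  linarith

lemma dist_polarize_le_of_nonneg_of_nonpos {L : ℝ≥0} (hf : LipschitzWith L f)
    (hx : 0 ≤ P.height x) (hy : P.height y ≤ 0) :
    dist (P.polarize f x) (P.polarize f y) ≤ L * dist x y := by
  have hxy : dist x (P.refl y) ≤ dist x y := by
    simpa only [P.involutive y] using P.dist_le_dist_refl x _ hx (P.height_refl_nonneg hy)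
  have hxy' : L * dist x (P.refl y) ≤ L * dist x y := by gcongr
  have h₁ := hf.dist_le_mul x y
  have h₂ := hf.dist_le_mul (P.refl x) (P.refl y)
  have h₃ := (hf.dist_le_mul x (P.refl y)).trans hxy'
  have h₄ := hf.dist_le_mul (P.refl x) y
  rw [P.isometry.dist_eq] at h₂
  rw [P.dist_refl_left] at h₄
  rw [P.polarize_of_nonneg f hx, P.polarize_of_nonpos f hy]
  rcases max_choice (f x) (f (P.refl x)) with hmax | hmax <;>
    rcases min_choice (f y) (f (P.refl y)) with hmin | hmin <;>
    rw [hmax, hmin] <;> linarith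

lemma lipschitzWith_polarize {L : ℝ≥0} (hf : LipschitzWith L f) :
    LipschitzWith L (P.polarize f) := by
  refine .of_dist_le_mul fun x y ↦ ?_
  have h₁ := hf.dist_le_mul x y
  have h₂ := hf.dist_le_mul (P.refl x) (P.refl y)
  rw [P.isometry.dist_eq] at h₂
  rcases le_total 0 (P.height x) with hx | hx <;> rcases le_total 0 (P.height y) with hy | hy
  · rw [P.polarize_of_nonneg f hx, P.polarize_of_nonneg f hy]
    exact (abs_max_sub_max_le_max _ _ _ _).trans (max_le h₁ h₂)
  · exact P.dist_polarize_le_of_nonneg_of_nonpos hf hx hy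
  · rw [dist_comm, dist_comm x]
    exact P.dist_polarize_le_of_nonneg_of_nonpos hf hy hx
  · rw [P.polarize_of_nonpos f hx, P.polarize_of_nonpos f hy]
    exact (abs_min_sub_min_le_max _ _ _ _).trans (max_le h₁ h₂)

/-- The sum of the pair density over the four pairs obtained from a pair of points by reflecting
either coordinate. -/
def orbitDensity (K : ℝ → ℝ) (f : X → ℝ) : X × X → ℝ :=
  (pairDensity K f + pairDensity K f ∘ Prod.map P.refl id) +
    (pairDensity K f + pairDensity K f ∘ Prod.map P.refl id) ∘ Prod.map id P.refl

lemma orbitDensity_refl_left (K : ℝ → ℝ) (f : X → ℝ) (x y : X) :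
    P.orbitDensity K f (P.refl x, y) = P.orbitDensity K f (x, y) := by
  simp only [orbitDensity, Pi.add_apply, Function.comp_apply, Prod.map_apply, id_eq, P.involutive x]
  ring

lemma orbitDensity_refl_right (K : ℝ → ℝ) (f : X → ℝ) (x y : X) :
    P.orbitDensity K f (x, P.refl y) = P.orbitDensity K f (x, y) := by
  simp only [orbitDensity, Pi.add_apply, Function.comp_apply, Prod.map_apply, id_eq, P.involutive y]
  ring

lemma orbitDensity_le_orbitDensity_polarize (hK : Antitone K) (f : X → ℝ) (x y : X) :
    P.orbitDensity K f (x, y) ≤ P.orbitDensity K (P.polarize f) (x, y) := by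
  wlog hx : 0 ≤ P.height x generalizing x
  · simpa only [orbitDensity_refl_left] using
      this (P.refl x) (P.height_refl_nonneg (not_le.1 hx).le)
  wlog hy : 0 ≤ P.height y generalizing y
  · simpa only [orbitDensity_refl_right] using
      this (P.refl y) (P.height_refl_nonneg (not_le.1 hy).le)
  have hk : K (dist x (P.refl y)) ≤ K (dist x y) := hK (P.dist_le_dist_refl x y hx hy)
  simp only [orbitDensity, pairDensity, Pi.add_apply, Function.comp_apply, Prod.map_apply, id_eq,
    P.dist_refl_left, P.involutive y,
    P.polarize_of_nonneg f hx, P.polarize_refl_of_nonneg f hx, P.polarize_of_nonneg f hy,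
    P.polarize_refl_of_nonneg f hy]
  rcases le_total (f x) (f (P.refl x)) with h₁ | h₁ <;>
    rcases le_total (f y) (f (P.refl y)) with h₂ | h₂ <;>
    simp only [max_eq_left h₁, max_eq_right h₁, min_eq_left h₁, min_eq_right h₁, max_eq_left h₂,
      max_eq_right h₂, min_eq_left h₂, min_eq_right h₂] <;>
    nlinarith only [mul_nonneg (sub_nonneg.2 hk) (mul_nonneg (sub_nonneg.2 h₁) (sub_nonneg.2 h₂))]

variable [SFinite μ]

lemma integrable_orbitDensity (hf : Integrable (pairDensity K f) (μ.prod μ)) :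
    Integrable (P.orbitDensity K f) (μ.prod μ) := by
  have h := hf.add ((P.measurePreserving.prod (.id μ)).integrable_comp_of_integrable hf)
  exact h.add (((MeasurePreserving.id μ).prod P.measurePreserving).integrable_comp_of_integrable h)

lemma integral_orbitDensity (hf : Integrable (pairDensity K f) (μ.prod μ)) :
    ∫ z, P.orbitDensity K f z ∂(μ.prod μ) = 4 * pairEnergy μ K f := by
  have hl : MeasurePreserving (Prod.map P.refl id) (μ.prod μ) (μ.prod μ) :=
    P.measurePreserving.prod (.id μ)
  have hr : MeasurePreserving (Prod.map id P.refl) (μ.prod μ) (μ.prod μ) :=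
    (MeasurePreserving.id μ).prod P.measurePreserving
  have hl' : Function.Involutive (Prod.map P.refl (id : X → X)) :=
    P.involutive.prodMap fun _ ↦ rfl
  have hr' : Function.Involutive (Prod.map (id : X → X) P.refl) :=
    Function.Involutive.prodMap (fun _ ↦ rfl) P.involutive
  rw [orbitDensity, integral_add_comp_involutive hr' hr
    (hf.add (hl.integrable_comp_of_integrable hf)), integral_add_comp_involutive hl' hl hf,
    pairEnergy]
  ring

theorem pairEnergy_le_pairEnergy_polarize (hK : Antitone K)
    (hf : Integrable (pairDensity K f) (μ.prod μ))
    (hpf : Integrable (pairDensity K (P.polarize f)) (μ.prod μ)) :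
    pairEnergy μ K f ≤ pairEnergy μ K (P.polarize f) := by
  have h : ∫ z, P.orbitDensity K f z ∂(μ.prod μ) ≤
      ∫ z, P.orbitDensity K (P.polarize f) z ∂(μ.prod μ) :=
    integral_mono (P.integrable_orbitDensity hf) (P.integrable_orbitDensity hpf)
      fun z ↦ P.orbitDensity_le_orbitDensity_polarize hK f z.1 z.2
  rw [P.integral_orbitDensity hf, P.integral_orbitDensity hpf] at h
  linarith

end Polarization

namespace Polarization

open scoped NNReal

variable {X : Type*} [MetricSpace X] [MeasurableSpace X] {μ : Measure X} (P : Polarization μ)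
  {f l : X → ℝ} {x : X}

lemma gain_of_nonneg (f l : X → ℝ) (hx : 0 ≤ P.height x) :
    (P.polarize f x - f x) * l x + (P.polarize f (P.refl x) - f (P.refl x)) * l (P.refl x) =
      (max (f x) (f (P.refl x)) - f x) * (l x - l (P.refl x)) := by
  rw [P.polarize_of_nonneg f hx, P.polarize_refl_of_nonneg f hx]
  linear_combination l (P.refl x) * max_add_min (f x) (f (P.refl x))

lemma gain_nonneg (f : X → ℝ) (hl : ∀ x, 0 < P.height x → l (P.refl x) < l x) (x : X) :
    0 ≤ (P.polarize f x - f x) * l x +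
      (P.polarize f (P.refl x) - f (P.refl x)) * l (P.refl x) := by
  wlog hx : 0 ≤ P.height x generalizing x
  · have h := this (P.refl x) (P.height_refl_nonneg (not_le.1 hx).le)
    rwa [P.involutive, add_comm] at h
  have hlx : l (P.refl x) ≤ l x := by
    rcases hx.eq_or_lt with h | h
    · rw [P.refl_eq_self h.symm]
    · exact (hl x h).le
  rw [P.gain_of_nonneg f l hx]
  exact mul_nonneg (sub_nonneg.2 (le_max_left _ _)) (sub_nonneg.2 hlx)

theorem integral_mul_lt_integral_polarize_mul [CompactSpace X] [BorelSpace X] [IsFiniteMeasure μ]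
    [μ.IsOpenPosMeasure] {L : ℝ≥0} (hf : LipschitzWith L f) (hl : Continuous l)
    (hup : ∀ x, 0 < P.height x → l (P.refl x) < l x) (hx : 0 < P.height x)
    (hfx : f x < f (P.refl x)) :
    ∫ x, f x * l x ∂μ < ∫ x, P.polarize f x * l x ∂μ := by
  have hint : ∀ g : X → ℝ, Continuous g → Integrable g μ := fun g hg ↦
    hg.integrable_of_hasCompactSupport (.of_compactSpace g)
  have hfc : Continuous f := hf.continuous
  have hpc : Continuous (P.polarize f) := (P.lipschitzWith_polarize hf).continuous
  have hσc : Continuous P.refl := P.isometry.continuous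
  let gain : X → ℝ := fun x ↦ (P.polarize f x - f x) * l x
  have hgain : Continuous gain := by fun_prop
  have hpos : 0 < ∫ x, (gain + gain ∘ P.refl) x ∂μ := by
    refine Continuous.integral_pos_of_hasCompactSupport_nonneg_nonzero (x := x) (by fun_prop)
      (.of_compactSpace _) (P.gain_nonneg f hup) (ne_of_gt ?_)
    rw [Pi.add_apply, Function.comp_apply, P.gain_of_nonneg f l hx.le, max_eq_right hfx.le]
    exact mul_pos (sub_pos.2 hfx) (sub_pos.2 (hup x hx))
  rw [integral_add_comp_involutive P.involutive P.measurePreserving (hint _ hgain)] at hpos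
  have hsub : ∫ x, gain x ∂μ = ∫ x, P.polarize f x * l x ∂μ - ∫ x, f x * l x ∂μ := by
    rw [← integral_sub (hint _ (by fun_prop)) (hint _ (by fun_prop))]
    simp only [gain, sub_mul]
  linarith

end Polarization

section PairEnergy

open BoundedContinuousFunction

lemma continuous_integral_mul_boundedContinuousFunction {Y : Type*} [TopologicalSpace Y]
    [MeasurableSpace Y] [OpensMeasurableSpace Y] {ν : Measure Y} {w : Y → ℝ}
    (hw : Integrable w ν) : Continuous fun h : Y →ᵇ ℝ ↦ ∫ y, w y * h y ∂ν := by
  have hint : ∀ h : Y →ᵇ ℝ, Integrable (fun y ↦ w y * h y) ν := fun h ↦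
    hw.mul_bdd h.continuous.aestronglyMeasurable (.of_forall h.norm_coe_le_norm)
  refine (LipschitzWith.of_dist_le_mul (K := (∫ y, ‖w y‖ ∂ν).toNNReal) fun g h ↦ ?_).continuous
  rw [Real.coe_toNNReal _ (by positivity), dist_eq_norm, ← integral_sub (hint g) (hint h),
    ← integral_mul_const]
  refine norm_integral_le_of_norm_le (hw.norm.mul_const _) (.of_forall fun y ↦ ?_)
  rw [← mul_sub, norm_mul, ← dist_eq_norm]
  gcongr
  exact dist_coe_le_dist y

lemma abs_pairDensity_sub_pairDensity_le {X : Type*} [PseudoMetricSpace X] {K : ℝ → ℝ}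
    {f g : X → ℝ} (hK : Antitone K) (hK₀ : ∀ s, 0 ≤ K s) (hf₁ : ∀ x, f x ∈ Set.Icc 0 1)
    (hg₁ : ∀ x, g x ∈ Set.Icc 0 1) (z : X × X) :
    |pairDensity K f z - pairDensity K g z| ≤ K 0 * (|f z.1 - g z.1| + |f z.2 - g z.2|) := by
  have hf := abs_of_nonneg (hf₁ z.1).1
  have hg := abs_of_nonneg (hg₁ z.2).1
  have hprod : |f z.1 * f z.2 - g z.1 * g z.2| ≤ |f z.1 - g z.1| + |f z.2 - g z.2| := by
    calc |f z.1 * f z.2 - g z.1 * g z.2|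
        = |(f z.1 - g z.1) * g z.2 + f z.1 * (f z.2 - g z.2)| := by ring_nf
      _ ≤ |f z.1 - g z.1| * g z.2 + f z.1 * |f z.2 - g z.2| := by
        grw [abs_add_le, abs_mul, abs_mul, hf, hg]
      _ ≤ |f z.1 - g z.1| + |f z.2 - g z.2| :=
        add_le_add (mul_le_of_le_one_right (abs_nonneg _) (hg₁ _).2)
          (mul_le_of_le_one_left (abs_nonneg _) (hf₁ _).2)
  rw [pairDensity, pairDensity, ← mul_sub, abs_mul, abs_of_nonneg (hK₀ _)]
  exact mul_le_mul (hK dist_nonneg) hprod (abs_nonneg _) (hK₀ 0)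

variable {X : Type*} [MetricSpace X] [SecondCountableTopology X] [MeasurableSpace X] [BorelSpace X]
  {μ : Measure X} [IsFiniteMeasure μ] {K : ℝ → ℝ} {f g : X → ℝ}

lemma integrable_kernel_dist (hK : Antitone K) (hK₀ : ∀ s, 0 ≤ K s) :
    Integrable (fun z : X × X ↦ K (dist z.1 z.2)) (μ.prod μ) := by
  refine .of_bound (hK.measurable.comp measurable_dist).aestronglyMeasurable (K 0)
    (.of_forall fun z ↦ ?_)
  rw [Real.norm_of_nonneg (hK₀ _)]
  exact hK dist_nonneg

lemma integrable_pairDensity (hK : Antitone K) (hK₀ : ∀ s, 0 ≤ K s) (hf : Measurable f)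
    (hf₁ : ∀ x, f x ∈ Set.Icc 0 1) : Integrable (pairDensity K f) (μ.prod μ) := by
  refine (integrable_kernel_dist hK hK₀).mul_bdd (c := 1)
    (by fun_prop : Measurable fun z : X × X ↦ f z.1 * f z.2).aestronglyMeasurable
    (.of_forall fun z ↦ ?_)
  rw [Real.norm_of_nonneg (mul_nonneg (hf₁ _).1 (hf₁ _).1)]
  exact mul_le_one₀ (hf₁ _).2 (hf₁ _).1 (hf₁ _).2

lemma continuous_pairEnergy (hK : Antitone K) (hK₀ : ∀ s, 0 ≤ K s) :
    Continuous fun g : X →ᵇ ℝ ↦ pairEnergy μ K g := by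
  let tensor : (X →ᵇ ℝ) → (X × X →ᵇ ℝ) := fun g ↦
    g.compContinuous ⟨Prod.fst, continuous_fst⟩ * g.compContinuous ⟨Prod.snd, continuous_snd⟩
  have htensor : Continuous tensor :=
    (continuous_compContinuous _).mul (continuous_compContinuous _)
  exact (continuous_integral_mul_boundedContinuousFunction
    (integrable_kernel_dist hK hK₀)).comp htensor

lemma abs_pairEnergy_sub_pairEnergy_le (ν : Measure X) [IsProbabilityMeasure ν] (hK : Antitone K)
    (hK₀ : ∀ s, 0 ≤ K s) (hf : Measurable f) (hg : Measurable g)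
    (hf₁ : ∀ x, f x ∈ Set.Icc 0 1) (hg₁ : ∀ x, g x ∈ Set.Icc 0 1) :
    |pairEnergy ν K f - pairEnergy ν K g| ≤ 2 * K 0 * ∫ x, |f x - g x| ∂ν := by
  have hfg : Integrable (fun x ↦ |f x - g x|) ν := by
    refine .of_bound (by fun_prop) 1 (.of_forall fun x ↦ ?_)
    rw [Real.norm_eq_abs, abs_abs]
    exact abs_sub_le_of_nonneg_of_le (hf₁ x).1 (hf₁ x).2 (hg₁ x).1 (hg₁ x).2
  have hsum : Integrable (fun z : X × X ↦ |f z.1 - g z.1| + |f z.2 - g z.2|) (ν.prod ν) :=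
    (hfg.comp_fst ν).add (hfg.comp_snd ν)
  rw [pairEnergy, pairEnergy, ← integral_sub (integrable_pairDensity hK hK₀ hf hf₁)
    (integrable_pairDensity hK hK₀ hg hg₁), ← Real.norm_eq_abs]
  calc ‖∫ z, (pairDensity K f z - pairDensity K g z) ∂(ν.prod ν)‖
      ≤ ∫ z : X × X, K 0 * (|f z.1 - g z.1| + |f z.2 - g z.2|) ∂(ν.prod ν) :=
        norm_integral_le_of_norm_le (hsum.const_mul (K 0))
          (.of_forall (abs_pairDensity_sub_pairDensity_le hK hK₀ hf₁ hg₁))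
    _ = 2 * K 0 * ∫ x, |f x - g x| ∂ν := by
        rw [integral_const_mul, integral_add (hfg.comp_fst ν) (hfg.comp_snd ν),
          integral_fun_fst (fun x ↦ |f x - g x|), integral_fun_snd (fun x ↦ |f x - g x|),
          probReal_univ, one_smul]
        ring

end PairEnergy

section Rearrangement

open BoundedContinuousFunction
open scoped NNReal

/-- `g` is obtained from `f` by a rearrangement that keeps the first two moments and does not lower
the pair energy. This is weaker than equimeasurability, but closed under uniform limits, and for a
near-indicator `f` the two moments suffice to make `g` a near-indicator as well. -/
structure IsEnergyRearrangement {X : Type*} [Dist X] [MeasurableSpace X] (μ : Measure X)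
    (K : ℝ → ℝ) (f g : X → ℝ) : Prop where
  integral_eq : ∫ x, g x ∂μ = ∫ x, f x ∂μ
  integral_sq_eq : ∫ x, g x ^ 2 ∂μ = ∫ x, f x ^ 2 ∂μ
  pairEnergy_le : pairEnergy μ K f ≤ pairEnergy μ K g

/-- Any two points on different levels of `l` are exchanged by a polarization that raises `l`. -/
def PolarizableAlong {X : Type*} [MetricSpace X] [MeasurableSpace X] (μ : Measure X) (l : X → ℝ) :
    Prop :=
  ∀ ⦃x y⦄, l y < l x → ∃ P : Polarization μ,
    P.refl x = y ∧ 0 < P.height x ∧ ∀ z, 0 < P.height z → l (P.refl z) < l z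

variable {X : Type*} [MetricSpace X] [CompactSpace X]

lemma isCompact_setOf_lipschitzWith_mem_Icc (L : ℝ≥0) (a b : ℝ) :
    IsCompact {g : X →ᵇ ℝ | LipschitzWith L g ∧ ∀ x, g x ∈ Set.Icc a b} := by
  let 𝓕 : Set (X →ᵇ ℝ) := {g | LipschitzWith L g ∧ ∀ x, g x ∈ Set.Icc a b}
  have hclosed : IsClosed 𝓕 := by
    simp only [𝓕, Set.ofPred_and, Set.ofPred_forall]
    exact ((isClosed_setOfPred_lipschitzWith (α := X) (β := ℝ) L).preimage continuous_coe).inter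
      (isClosed_iInter fun x ↦ isClosed_Icc.preimage (continuous_eval_const x))
  have hequi : Equicontinuous ((↑) : 𝓕 → X → ℝ) :=
    (LipschitzWith.uniformEquicontinuous (fun g : 𝓕 ↦ ⇑g.1) L fun g ↦ g.2.1).equicontinuous
  exact arzela_ascoli₂ (Set.Icc a b) isCompact_Icc 𝓕 hclosed (fun g x hg ↦ hg.2 x) hequi

variable [MeasurableSpace X] [BorelSpace X] {μ : Measure X} [IsFiniteMeasure μ]
  {K : ℝ → ℝ} {f l : X → ℝ} {L : ℝ≥0}

lemma isClosed_setOf_isEnergyRearrangement (hK : Antitone K) (hK₀ : ∀ s, 0 ≤ K s) (f : X → ℝ) :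
    IsClosed {g : X →ᵇ ℝ | IsEnergyRearrangement μ K f g} := by
  have hint : Continuous fun g : X →ᵇ ℝ ↦ ∫ x, g x ∂μ := by
    simpa only [one_mul] using
      continuous_integral_mul_boundedContinuousFunction (integrable_const (μ := μ) (1 : ℝ))
  have hset : {g : X →ᵇ ℝ | IsEnergyRearrangement μ K f g} =
      {g : X →ᵇ ℝ | ∫ x, g x ∂μ = ∫ x, f x ∂μ} ∩ {g : X →ᵇ ℝ | ∫ x, g x ^ 2 ∂μ = ∫ x, f x ^ 2 ∂μ} ∩
        {g : X →ᵇ ℝ | pairEnergy μ K f ≤ pairEnergy μ K g} :=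
    Set.ext fun _ ↦ ⟨fun h ↦ ⟨⟨h.1, h.2⟩, h.3⟩, fun h ↦ ⟨h.1.1, h.1.2, h.2⟩⟩
  rw [hset]
  exact ((isClosed_eq hint continuous_const).inter
    (isClosed_eq (hint.comp (continuous_pow 2)) continuous_const)).inter
    (isClosed_le continuous_const (continuous_pairEnergy hK hK₀))

lemma Polarization.isEnergyRearrangement_polarize (P : Polarization μ) (hK : Antitone K)
    (hK₀ : ∀ s, 0 ≤ K s) (hf : LipschitzWith L f) (hf₁ : ∀ x, f x ∈ Set.Icc 0 1) :
    IsEnergyRearrangement μ K f (P.polarize f) := by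
  have hint : ∀ g : X → ℝ, Continuous g → Integrable g μ := fun g hg ↦
    hg.integrable_of_hasCompactSupport (.of_compactSpace g)
  have hfc : Continuous f := hf.continuous
  have hpc : Continuous (P.polarize f) := (P.lipschitzWith_polarize hf).continuous
  exact {
    integral_eq := P.integral_comp_polarize (φ := id) (hint _ hfc) (hint _ hpc)
    integral_sq_eq := P.integral_comp_polarize (φ := (· ^ 2)) (hint _ (hfc.pow 2))
      (hint _ (hpc.pow 2))
    pairEnergy_le := P.pairEnergy_le_pairEnergy_polarize hK
      (integrable_pairDensity hK hK₀ hfc.measurable hf₁)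
      (integrable_pairDensity hK hK₀ hpc.measurable (P.polarize_mem hf₁)) }

theorem exists_isEnergyRearrangement_monotone [μ.IsOpenPosMeasure] (hl : Continuous l)
    (hpol : PolarizableAlong μ l) (hK : Antitone K) (hK₀ : ∀ s, 0 ≤ K s) (hf : LipschitzWith L f)
    (hf₁ : ∀ x, f x ∈ Set.Icc 0 1) :
    ∃ g : X → ℝ, LipschitzWith L g ∧ (∀ x, g x ∈ Set.Icc 0 1) ∧ IsEnergyRearrangement μ K f g ∧
      ∀ x y, l y < l x → g y ≤ g x := by
  have hcompact : IsCompact ({g : X →ᵇ ℝ | LipschitzWith L g ∧ ∀ x, g x ∈ Set.Icc 0 1} ∩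
      {g : X →ᵇ ℝ | IsEnergyRearrangement μ K f g}) :=
    (isCompact_setOf_lipschitzWith_mem_Icc L 0 1).inter_right
      (isClosed_setOf_isEnergyRearrangement hK hK₀ f)
  have hcont : Continuous fun g : X →ᵇ ℝ ↦ ∫ x, l x * g x ∂μ :=
    continuous_integral_mul_boundedContinuousFunction
      (hl.integrable_of_hasCompactSupport (.of_compactSpace l))
  obtain ⟨g, ⟨⟨hgL, hg₁⟩, hfg⟩, hmax⟩ := hcompact.exists_isMaxOn
    ⟨mkOfCompact ⟨f, hf.continuous⟩, ⟨hf, hf₁⟩, rfl, rfl, le_rfl⟩ hcont.continuousOn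
  refine ⟨g, hgL, hg₁, hfg, fun x y hxy ↦ ?_⟩
  obtain ⟨P, rfl, hx, hup⟩ := hpol hxy
  by_contra! hlt
  have hPL : LipschitzWith L (P.polarize g) := P.lipschitzWith_polarize hgL
  have hPg := P.isEnergyRearrangement_polarize hK hK₀ hgL hg₁
  have hle := hmax (a := mkOfCompact ⟨P.polarize g, hPL.continuous⟩) ⟨⟨hPL, P.polarize_mem hg₁⟩,
    hPg.integral_eq.trans hfg.integral_eq, hPg.integral_sq_eq.trans hfg.integral_sq_eq,
    hfg.pairEnergy_le.trans hPg.pairEnergy_le⟩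
  simp only [Set.mem_ofPred_eq, mul_comm (l _)] at hle
  exact (P.integral_mul_lt_integral_polarize_mul hgL hl hup hx hlt).not_ge hle

end Rearrangement

section Indicator

open scoped NNReal

variable {X : Type*} {A B : Set X} {f : X → ℝ}

lemma indicator_one_mem_Icc (A : Set X) (x : X) : A.indicator (1 : X → ℝ) x ∈ Set.Icc 0 1 :=
  ⟨Set.indicator_nonneg (fun _ _ ↦ zero_le_one) x,
    Set.indicator_le_self' (f := (1 : X → ℝ)) (fun _ _ ↦ zero_le_one) x⟩

lemma sub_sq_le_abs_sub_indicator {x : X} (hf₁ : f x ∈ Set.Icc 0 1) (A : Set X) :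
    f x - f x ^ 2 ≤ |f x - A.indicator 1 x| := by
  by_cases hx : x ∈ A
  · rw [Set.indicator_of_mem hx, Pi.one_apply, abs_sub_comm]
    exact le_abs.2 (.inl (by nlinarith only [hf₁.1, hf₁.2]))
  · rw [Set.indicator_of_notMem hx, sub_zero]
    exact le_abs.2 (.inl (by nlinarith only [hf₁.1, hf₁.2]))

lemma abs_sub_indicator_half_le_le {x : X} (hf₁ : f x ∈ Set.Icc 0 1) :
    |f x - {x | 1 / 2 ≤ f x}.indicator 1 x| ≤ 2 * (f x - f x ^ 2) := by
  obtain ⟨hf₀, hf₁⟩ := hf₁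
  by_cases hx : 1 / 2 ≤ f x
  · rw [Set.indicator_of_mem (by exact hx), Pi.one_apply, abs_of_nonpos (by linarith)]
    nlinarith
  · rw [Set.indicator_of_notMem (by exact hx), sub_zero, abs_of_nonneg hf₀]
    nlinarith

lemma abs_sub_indicator_le_indicator_sdiff {F U : Set X} (hFA : F ⊆ A) (hAU : A ⊆ U)
    (hf₁ : ∀ x, f x ∈ Set.Icc 0 1) (hF : ∀ x ∈ F, f x = 1) (hU : ∀ x ∉ U, f x = 0) (x : X) :
    |f x - A.indicator 1 x| ≤ (U \ F).indicator 1 x := by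
  by_cases hxF : x ∈ F
  · simp [hF x hxF, hFA hxF, hxF]
  by_cases hxU : x ∈ U
  · rw [Set.indicator_of_mem (Set.mem_sdiff_of_mem hxU hxF), Pi.one_apply]
    exact abs_sub_le_of_nonneg_of_le (hf₁ x).1 (hf₁ x).2 (indicator_one_mem_Icc A x).1
      (indicator_one_mem_Icc A x).2
  · have hxA : x ∉ A := fun h ↦ hxU (hAU h)
    simp [hU x hxU, hxU, hxA]

variable [MeasurableSpace X] {μ : Measure X} [IsFiniteMeasure μ]

lemma abs_integral_sub_measureReal_le (hf : Integrable f μ) (hA : MeasurableSet A) :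
    |∫ x, f x ∂μ - μ.real A| ≤ ∫ x, |f x - A.indicator 1 x| ∂μ := by
  have hA₁ : Integrable (A.indicator (1 : X → ℝ)) μ := (integrable_const (1 : ℝ)).indicator hA
  rw [← integral_indicator_one hA, ← integral_sub hf hA₁]
  exact abs_integral_le_integral_abs

lemma integrable_of_mem_Icc (hf : Measurable f) (hf₁ : ∀ x, f x ∈ Set.Icc 0 1) :
    Integrable f μ :=
  .of_bound hf.aestronglyMeasurable 1 (.of_forall fun x ↦ by
    rw [Real.norm_of_nonneg (hf₁ x).1]
    exact (hf₁ x).2)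

lemma integrable_sub_sq (hf : Measurable f) (hf₁ : ∀ x, f x ∈ Set.Icc 0 1) :
    Integrable (fun x ↦ f x - f x ^ 2) μ :=
  (integrable_of_mem_Icc hf hf₁).sub (integrable_of_mem_Icc (hf.pow_const 2) fun x ↦
    ⟨sq_nonneg _, pow_le_one₀ (hf₁ x).1 (hf₁ x).2⟩)

lemma IsEnergyRearrangement.integral_abs_sub_indicator_half_le_le [Dist X] {K : ℝ → ℝ} {g : X → ℝ}
    (hfg : IsEnergyRearrangement μ K f g) (hf : Measurable f) (hf₁ : ∀ x, f x ∈ Set.Icc 0 1)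
    (hg : Measurable g) (hg₁ : ∀ x, g x ∈ Set.Icc 0 1) (hA : MeasurableSet A) :
    ∫ x, |g x - {x | 1 / 2 ≤ g x}.indicator 1 x| ∂μ ≤ 2 * ∫ x, |f x - A.indicator 1 x| ∂μ := by
  have hsq : ∀ h : X → ℝ, Measurable h → (∀ x, h x ∈ Set.Icc 0 1) →
      ∫ x, (h x - h x ^ 2) ∂μ = ∫ x, h x ∂μ - ∫ x, h x ^ 2 ∂μ := fun h hh hh₁ ↦
    integral_sub (integrable_of_mem_Icc hh hh₁) (integrable_of_mem_Icc (hh.pow_const 2) fun x ↦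
      ⟨sq_nonneg _, pow_le_one₀ (hh₁ x).1 (hh₁ x).2⟩)
  have hA₁ : Integrable (A.indicator (1 : X → ℝ)) μ := (integrable_const (1 : ℝ)).indicator hA
  calc ∫ x, |g x - {x | 1 / 2 ≤ g x}.indicator 1 x| ∂μ
      ≤ ∫ x, 2 * (g x - g x ^ 2) ∂μ :=
        integral_mono_of_nonneg (.of_forall fun x ↦ abs_nonneg _)
          ((integrable_sub_sq hg hg₁).const_mul 2)
          (.of_forall fun x ↦ abs_sub_indicator_half_le_le (hg₁ x))
    _ = 2 * ∫ x, (f x - f x ^ 2) ∂μ := by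
        rw [integral_const_mul, hsq g hg hg₁, hsq f hf hf₁, hfg.integral_eq, hfg.integral_sq_eq]
    _ ≤ 2 * ∫ x, |f x - A.indicator 1 x| ∂μ := by
        have hfA : Integrable (fun x ↦ |f x - A.indicator 1 x|) μ :=
          ((integrable_of_mem_Icc hf hf₁).sub hA₁).abs
        exact mul_le_mul_of_nonneg_left (integral_mono (integrable_sub_sq hf hf₁) hfA
          fun x ↦ sub_sq_le_abs_sub_indicator (hf₁ x) A) zero_le_two

variable [MetricSpace X] [BorelSpace X]

lemma exists_isClosed_isOpen_measureReal_sdiff_le (hA : MeasurableSet A) {δ : ℝ} (hδ : 0 < δ) :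
    ∃ F U, F ⊆ A ∧ A ⊆ U ∧ IsClosed F ∧ IsOpen U ∧ μ.real (U \ F) ≤ δ := by
  have hδ' : ENNReal.ofReal (δ / 2) ≠ 0 := by simpa using hδ
  obtain ⟨F, hFA, hFc, hF⟩ := hA.exists_isClosed_sdiff_lt (μ := μ) (measure_ne_top _ _) hδ'
  obtain ⟨U, hAU, hUo, -, hU⟩ := hA.exists_isOpen_sdiff_lt (μ := μ) (measure_ne_top _ _) hδ'
  refine ⟨F, U, hFA, hAU, hFc, hUo, ?_⟩
  calc μ.real (U \ F) ≤ μ.real (U \ A) + μ.real (A \ F) := by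
        rw [← Set.sdiff_union_sdiff_cancel hAU hFA]
        exact measureReal_union_le _ _
    _ ≤ δ / 2 + δ / 2 := add_le_add (ENNReal.toReal_le_of_le_ofReal (by positivity) hU.le)
        (ENNReal.toReal_le_of_le_ofReal (by positivity) hF.le)
    _ = δ := add_halves δ

lemma exists_lipschitzWith_integral_abs_sub_indicator_le [CompactSpace X] (hA : MeasurableSet A)
    {δ : ℝ} (hδ : 0 < δ) :
    ∃ (f : X → ℝ) (L : ℝ≥0), LipschitzWith L f ∧ (∀ x, f x ∈ Set.Icc 0 1) ∧
      ∫ x, |f x - A.indicator 1 x| ∂μ ≤ δ := by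
  obtain ⟨F, U, hFA, hAU, hF, hU, hUF⟩ :=
    exists_isClosed_isOpen_measureReal_sdiff_le (μ := μ) hA hδ
  obtain ⟨r, hr, hrU⟩ := hF.isCompact.exists_thickening_subset_open hU (hFA.trans hAU)
  have hf₁ : ∀ x, (thickenedIndicator hr F x : ℝ) ∈ Set.Icc 0 1 := fun x ↦
    ⟨NNReal.coe_nonneg _, mod_cast thickenedIndicator_le_one hr F x⟩
  have hmeas : MeasurableSet (U \ F) := hU.measurableSet.diff hF.measurableSet
  refine ⟨fun x ↦ thickenedIndicator hr F x, r.toNNReal⁻¹, fun x y ↦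
    lipschitzWith_thickenedIndicator hr F x y, hf₁, le_trans ?_ hUF⟩
  rw [← integral_indicator_one hmeas]
  refine integral_mono_of_nonneg (.of_forall fun x ↦ abs_nonneg _)
    ((integrable_const 1).indicator hmeas) (.of_forall
      (abs_sub_indicator_le_indicator_sdiff hFA hAU hf₁ (fun x hx ↦ ?_) fun x hx ↦ ?_))
  · rw [thickenedIndicator_one hr F hx, NNReal.coe_one]
  · rw [thickenedIndicator_zero hr F fun h ↦ hx (hrU h), NNReal.coe_zero]

end Indicator

section ClosePairs

open scoped NNReal

/-- The pairs of points of `A` at distance at most `τ`. -/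
def closePairs {X : Type*} [Dist X] (τ : ℝ) (A : Set X) : Set (X × X) :=
  {z | z.2 ∈ A ∧ z.1 ∈ A ∧ dist z.1 z.2 ≤ τ}

variable {X : Type*} [MetricSpace X] {A B : Set X} {l : X → ℝ}

lemma closePairs_subset_closePairs (τ : ℝ) (hAB : A ⊆ B) : closePairs τ A ⊆ closePairs τ B :=
  fun _ h ↦ ⟨hAB h.1, hAB h.2.1, h.2.2⟩

lemma exists_superlevel_subset_subset [CompactSpace X] (hl : Continuous l)
    (hB : ∀ x y, l y < l x → y ∈ B → x ∈ B) :
    ∃ t, (∀ t' > t, {x | t' ≤ l x} ⊆ B) ∧ B ⊆ {x | t ≤ l x} := by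
  rcases B.eq_empty_or_nonempty with rfl | hne
  · obtain ⟨M, hM⟩ := (isCompact_range hl).bddAbove
    exact ⟨M, fun t' ht' x hx ↦ ((hM (Set.mem_range_self x)).not_gt (ht'.trans_le hx)).elim,
      Set.empty_subset _⟩
  · have hbdd : BddBelow (l '' B) :=
      (isCompact_range hl).bddBelow.mono (Set.image_subset_range _ _)
    refine ⟨sInf (l '' B), fun t' ht' x hx ↦ ?_, fun x hx ↦ csInf_le hbdd ⟨x, hx, rfl⟩⟩
    obtain ⟨_, ⟨y, hy, rfl⟩, hlt⟩ := exists_lt_of_csInf_lt (hne.image l) ht'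
    exact hB x y (hlt.trans_le hx) hy

variable [MeasurableSpace X] [BorelSpace X] {μ : Measure X}

lemma measurableSet_closePairs [SecondCountableTopology X] (τ : ℝ) (hA : MeasurableSet A) :
    MeasurableSet (closePairs τ A) :=
  (measurable_snd hA).inter ((measurable_fst hA).inter
    (measurableSet_le measurable_dist measurable_const))

lemma pairEnergy_indicator [SecondCountableTopology X] (μ : Measure X) (τ : ℝ)
    (hA : MeasurableSet A) :
    pairEnergy μ ((Set.Iic τ).indicator 1) (A.indicator 1) = (μ.prod μ).real (closePairs τ A) := by
  rw [← integral_indicator_one (measurableSet_closePairs τ hA), pairEnergy]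
  congr 1 with z
  by_cases h₁ : z.1 ∈ A <;> by_cases h₂ : z.2 ∈ A <;> by_cases h₃ : dist z.1 z.2 ≤ τ <;>
    simp [pairDensity, closePairs, h₁, h₂, h₃]

lemma antitone_indicator_Iic_one (τ : ℝ) : Antitone ((Set.Iic τ).indicator (1 : ℝ → ℝ)) := by
  intro s s' hs
  by_cases h : s' ≤ τ
  · simp [h, hs.trans h]
  · simpa [h] using (indicator_one_mem_Icc (Set.Iic τ) s).1

lemma abs_pairEnergy_sub_measureReal_closePairs_le [SecondCountableTopology X]
    [IsProbabilityMeasure μ] {f : X → ℝ} (τ : ℝ) (hf : Measurable f)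
    (hf₁ : ∀ x, f x ∈ Set.Icc 0 1) (hA : MeasurableSet A) :
    |pairEnergy μ ((Set.Iic τ).indicator 1) f - (μ.prod μ).real (closePairs τ A)| ≤
      2 * ∫ x, |f x - A.indicator 1 x| ∂μ := by
  have hK₁ : ∀ s, (Set.Iic τ).indicator (1 : ℝ → ℝ) s ∈ Set.Icc 0 1 := indicator_one_mem_Icc _
  rw [← pairEnergy_indicator μ τ hA]
  refine (abs_pairEnergy_sub_pairEnergy_le μ (antitone_indicator_Iic_one τ) (fun s ↦ (hK₁ s).1) hf
    (measurable_one.indicator hA) hf₁ (indicator_one_mem_Icc A)).trans ?_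
  gcongr
  exact mul_le_of_le_one_right zero_le_two (hK₁ 0).2

variable [CompactSpace X] [IsProbabilityMeasure μ] [μ.IsOpenPosMeasure]

lemma exists_rearranged_set (hl : Continuous l) (hpol : PolarizableAlong μ l) (τ : ℝ)
    (hA : MeasurableSet A) {δ : ℝ} (hδ : 0 < δ) :
    ∃ B, (∀ x y, l y < l x → y ∈ B → x ∈ B) ∧ |μ.real B - μ.real A| ≤ δ ∧
      (μ.prod μ).real (closePairs τ A) ≤ (μ.prod μ).real (closePairs τ B) + δ := by
  let K : ℝ → ℝ := (Set.Iic τ).indicator 1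
  have hK₀ : ∀ s, 0 ≤ K s := fun s ↦ (indicator_one_mem_Icc _ s).1
  obtain ⟨f, L, hf, hf₁, hfA⟩ :=
    exists_lipschitzWith_integral_abs_sub_indicator_le (μ := μ) hA (δ := δ / 6) (by positivity)
  obtain ⟨g, hg, hg₁, hfg, hmono⟩ :=
    exists_isEnergyRearrangement_monotone hl hpol (antitone_indicator_Iic_one τ) hK₀ hf hf₁
  let B : Set X := {x | 1 / 2 ≤ g x}
  have hB : MeasurableSet B := measurableSet_le measurable_const hg.continuous.measurable
  have hgB : ∫ x, |g x - B.indicator 1 x| ∂μ ≤ 2 * (δ / 6) :=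
    (hfg.integral_abs_sub_indicator_half_le_le hf.continuous.measurable hf₁
      hg.continuous.measurable hg₁ hA).trans (by gcongr)
  refine ⟨B, fun x y hxy hy ↦ le_trans hy (hmono x y hxy), ?_, ?_⟩
  · have hAf := (abs_integral_sub_measureReal_le
      (integrable_of_mem_Icc hf.continuous.measurable hf₁) hA).trans hfA
    have hBg := (abs_integral_sub_measureReal_le
      (integrable_of_mem_Icc hg.continuous.measurable hg₁) hB).trans hgB
    rw [hfg.integral_eq] at hBg
    rw [abs_le] at *
    constructor <;> linarith
  · have hAf := abs_pairEnergy_sub_measureReal_closePairs_le (μ := μ) τ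
      hf.continuous.measurable hf₁ hA
    have hBg := abs_pairEnergy_sub_measureReal_closePairs_le (μ := μ) τ
      hg.continuous.measurable hg₁ hB
    have hle := hfg.pairEnergy_le
    rw [abs_le] at hAf hBg
    linarith

/-- Measures of superlevel sets may jump, so that of `A` is only pinned down between those of the
superlevel sets just above and at the threshold `t`. -/
theorem exists_superlevel_closePairs_le (hl : Continuous l) (hpol : PolarizableAlong μ l) (τ : ℝ)
    (hA : MeasurableSet A) {δ : ℝ} (hδ : 0 < δ) :
    ∃ t, (∀ t' > t, μ.real {x | t' ≤ l x} ≤ μ.real A + δ) ∧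
      μ.real A ≤ μ.real {x | t ≤ l x} + δ ∧
      (μ.prod μ).real (closePairs τ A) ≤ (μ.prod μ).real (closePairs τ {x | t ≤ l x}) + δ := by
  obtain ⟨B, hB, hAB, hpairs⟩ := exists_rearranged_set hl hpol τ hA hδ
  obtain ⟨t, hsub, hsup⟩ := exists_superlevel_subset_subset hl hB
  rw [abs_le] at hAB
  refine ⟨t, fun t' ht' ↦ ?_, ?_, ?_⟩
  · have h := measureReal_mono (μ := μ) (hsub t' ht')
    linarith
  · have h := measureReal_mono (μ := μ) hsup
    linarith
  · have h := measureReal_mono (μ := μ.prod μ) (closePairs_subset_closePairs τ hsup)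
    linarith

end ClosePairs

/-! ### Spherical caps -/

section UnitSphere

open Metric

variable {E : Type*} [NormedAddCommGroup E] [InnerProductSpace ℝ E]

lemma dist_sq_eq_two_sub_inner (u v : sphere (0 : E) 1) :
    dist u v ^ 2 = 2 - 2 * inner ℝ (u : E) v := by
  rw [Subtype.dist_eq, dist_eq_norm, norm_sub_sq_real, norm_eq_of_mem_sphere u,
    norm_eq_of_mem_sphere v]
  ring

lemma dist_le_iff_le_inner {τ : ℝ} (hτ : 0 ≤ τ) (u v : sphere (0 : E) 1) :
    dist u v ≤ τ ↔ 1 - τ ^ 2 / 2 ≤ inner ℝ (u : E) v := by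
  rw [← sq_le_sq₀ dist_nonneg hτ, dist_sq_eq_two_sub_inner]
  constructor <;> intro h <;> linarith

/-- The spherical cap `{v | t ≤ ⟪e, v⟫}` of the unit sphere around the unit vector `e`. -/
def sphericalCap (e : E) (t : ℝ) : Set (sphere (0 : E) 1) :=
  {v | t ≤ inner ℝ e (v : E)}

lemma isClosed_sphericalCap (e : E) (t : ℝ) : IsClosed (sphericalCap e t) :=
  isClosed_le continuous_const (by fun_prop)

lemma antitone_sphericalCap (e : E) : Antitone (sphericalCap e) :=
  fun _ _ hst _ hv ↦ hst.trans hv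

/-- The action of a linear isometry on the unit sphere. -/
def sphereMap (L : E ≃ₗᵢ[ℝ] E) (v : sphere (0 : E) 1) : sphere (0 : E) 1 :=
  ⟨L v, by simp⟩

@[simp]
lemma coe_sphereMap (L : E ≃ₗᵢ[ℝ] E) (v : sphere (0 : E) 1) : (sphereMap L v : E) = L v := rfl

lemma isometry_sphereMap (L : E ≃ₗᵢ[ℝ] E) : Isometry (sphereMap L) :=
  .of_dist_eq fun u v ↦ L.dist_map u v

/-- The reflection in the hyperplane orthogonal to `x - y`. It exchanges `x` and `y` if these have
the same norm. -/
def mirror (x y : E) : E ≃ₗᵢ[ℝ] E :=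
  (ℝ ∙ (x - y))ᗮ.reflection

lemma mirror_apply (x y z : E) :
    mirror x y z = z - (2 * (inner ℝ (x - y) z / ‖x - y‖ ^ 2)) • (x - y) := by
  rw [mirror, Submodule.reflection_orthogonal_apply, Submodule.reflection_singleton_apply, neg_sub,
    RCLike.ofReal_real_eq_id, id, mul_smul, two_smul ℝ, two_smul ℕ]

lemma mirror_apply_left {x y : E} (h : ‖x‖ = ‖y‖) : mirror x y x = y :=
  Submodule.reflection_sub h

lemma mirror_mirror (x y z : E) : mirror x y (mirror x y z) = z :=
  Submodule.reflection_reflection _ z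

lemma inner_mirror_left (x y z w : E) : inner ℝ (mirror x y z) w = inner ℝ z (mirror x y w) := by
  rw [← LinearIsometryEquiv.inner_map_map (mirror x y) (mirror x y z), mirror_mirror]

lemma inner_mirror_right (x y z w : E) : inner ℝ w (mirror x y z) =
    inner ℝ w z - 2 * (inner ℝ (x - y) z / ‖x - y‖ ^ 2) * inner ℝ w (x - y) := by
  rw [mirror_apply, inner_sub_right, inner_smul_right]

lemma dist_le_dist_sphereMap_mirror {x y : E} {u v : sphere (0 : E) 1}
    (hu : 0 ≤ inner ℝ (x - y) (u : E)) (hv : 0 ≤ inner ℝ (x - y) (v : E)) :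
    dist u v ≤ dist u (sphereMap (mirror x y) v) := by
  rw [← sq_le_sq₀ dist_nonneg dist_nonneg, dist_sq_eq_two_sub_inner, dist_sq_eq_two_sub_inner,
    coe_sphereMap, inner_mirror_right, real_inner_comm (x - y) (u : E)]
  have : 0 ≤ 2 * (inner ℝ (x - y) (v : E) / ‖x - y‖ ^ 2) * inner ℝ (x - y) (u : E) := by positivity
  linarith

lemma inner_mirror_lt {e x y z : E} (hlt : inner ℝ e y < inner ℝ e x)
    (hz : 0 < inner ℝ (x - y) z) : inner ℝ e (mirror x y z) < inner ℝ e z := by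
  have hxy : 0 < ‖x - y‖ := norm_sub_pos_iff.2 fun h ↦ hlt.ne (h ▸ rfl)
  have he : 0 < inner ℝ e (x - y) := by rwa [inner_sub_right, sub_pos]
  rw [inner_mirror_right]
  exact sub_lt_self _ (by positivity)

lemma inner_sub_left_pos {x y : E} (hxy : x ≠ y) (hle : ‖y‖ ≤ ‖x‖) : 0 < inner ℝ (x - y) x := by
  have hpos : 0 < ‖x - y‖ ^ 2 := by have := norm_sub_pos_iff.2 hxy; positivity
  have hsq : ‖y‖ ^ 2 ≤ ‖x‖ ^ 2 := by gcongr
  rw [norm_sub_sq_real, real_inner_comm] at hpos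
  rw [inner_sub_left, real_inner_self_eq_norm_sq]
  linarith

lemma inner_sub_mirror {x y : E} (hxy : x ≠ y) (z : E) :
    inner ℝ (x - y) (mirror x y z) = -inner ℝ (x - y) z := by
  have hnorm : ‖x - y‖ ≠ 0 := norm_ne_zero_iff.2 (sub_ne_zero.2 hxy)
  rw [inner_mirror_right, real_inner_self_eq_norm_sq]
  field_simp
  ring

variable [FiniteDimensional ℝ E] [MeasurableSpace E] [BorelSpace E]

open scoped Pointwise in
lemma measurePreserving_sphereMap_toSphere (L : E ≃ₗᵢ[ℝ] E) :
    MeasurePreserving (sphereMap L) (volume : Measure E).toSphere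
      (volume : Measure E).toSphere := by
  have hmeas : Measurable (sphereMap L) := (isometry_sphereMap L).continuous.measurable
  refine ⟨hmeas, Measure.ext fun s hs ↦ ?_⟩
  have hcoe : ((↑) '' (sphereMap L ⁻¹' s) : Set E) = L ⁻¹' ((↑) '' s) := by
    ext x
    constructor
    · rintro ⟨v, hv, rfl⟩
      exact ⟨sphereMap L v, hv, rfl⟩
    · rintro ⟨v, hv, hvx⟩
      have hx : ‖x‖ = 1 := by rw [← L.norm_map, ← hvx, norm_eq_of_mem_sphere]
      refine ⟨⟨x, mem_sphere_zero_iff_norm.2 hx⟩, ?_, rfl⟩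
      rwa [Set.mem_preimage, show sphereMap L ⟨x, _⟩ = v from Subtype.ext hvx.symm]
  have hcone : (Set.Ioo (0 : ℝ) 1 • L ⁻¹' ((↑) '' s) : Set E) =
      L ⁻¹' (Set.Ioo (0 : ℝ) 1 • ((↑) '' s : Set E)) := by
    ext x
    constructor
    · rintro ⟨r, hr, y, hy, rfl⟩
      exact ⟨r, hr, L y, hy, (map_smul L r y).symm⟩
    · rintro ⟨r, hr, y, hy, hyx⟩
      exact ⟨r, hr, L.symm y, by simpa using hy, L.injective (by simpa using hyx)⟩
  rw [Measure.map_apply hmeas hs, Measure.toSphere_apply' _ (hmeas hs),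
    Measure.toSphere_apply' _ hs, hcoe, hcone]
  exact congrArg _ (MeasurePreserving.measure_preimage_equiv
    (f := L.toHomeomorph.toMeasurableEquiv) L.measurePreserving _)

end UnitSphere

section SphereMeasure

open Metric

instance isProbabilityMeasure_sphereMeasure (d : ℕ) [NeZero d] :
    IsProbabilityMeasure (sphereMeasure d) where
  measure_univ := by
    have hne : (volume : Measure (EuclideanSpace ℝ (Fin d))).toSphere Set.univ ≠ 0 :=
      Measure.measure_univ_ne_zero.2 (Measure.toSphere_ne_zero _)
    exact ENNReal.inv_mul_cancel hne (measure_ne_top _ _)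

instance isOpenPosMeasure_sphereMeasure (d : ℕ) : (sphereMeasure d).IsOpenPosMeasure :=
  Measure.isOpenPosMeasure_smul _ (ENNReal.inv_ne_zero.2 (measure_ne_top _ _))

/-- The unit sphere `S^{d-1}` of `ℝ^d`. -/
abbrev UnitSphere (d : ℕ) := sphere (0 : EuclideanSpace ℝ (Fin d)) 1

variable {d : ℕ}

lemma measurePreserving_sphereMap
    (L : EuclideanSpace ℝ (Fin d) ≃ₗᵢ[ℝ] EuclideanSpace ℝ (Fin d)) :
    MeasurePreserving (sphereMap L) (sphereMeasure d) (sphereMeasure d) :=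
  (measurePreserving_sphereMap_toSphere L).smul_measure _

lemma measureReal_sphericalCap_pos [NeZero d] {e : EuclideanSpace ℝ (Fin d)} (he : ‖e‖ = 1) {t : ℝ}
    (ht : t < 1) : 0 < (sphereMeasure d).real (sphericalCap e t) := by
  have hopen : IsOpen {v : UnitSphere d | t < inner ℝ e (v : _)} :=
    isOpen_lt continuous_const (by fun_prop)
  have hne : {v : UnitSphere d | t < inner ℝ e (v : _)}.Nonempty :=
    ⟨⟨e, mem_sphere_zero_iff_norm.2 he⟩, by simpa [he] using ht⟩
  rw [measureReal_def, ENNReal.toReal_pos_iff]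
  exact ⟨(hopen.measure_pos _ hne).trans_le (measure_mono fun v (hv : t < _) ↦ hv.le),
    measure_lt_top _ _⟩

lemma measure_sphericalCap_eq {a b : EuclideanSpace ℝ (Fin d)} (hab : ‖a‖ = ‖b‖) (t : ℝ) :
    sphereMeasure d (sphericalCap a t) = sphereMeasure d (sphericalCap b t) := by
  have hpre : sphereMap (mirror a b) ⁻¹' sphericalCap a t = sphericalCap b t := by
    ext v
    simp only [sphericalCap, Set.preimage_ofPred_eq, Set.mem_ofPred_eq, coe_sphereMap,
      ← inner_mirror_left, mirror_apply_left hab]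
  rw [← hpre, (measurePreserving_sphereMap _).measure_preimage
    (isClosed_sphericalCap a t).measurableSet.nullMeasurableSet]

lemma measureReal_prod_setOf_fst_mem_and_dist_le [NeZero d] {e : EuclideanSpace ℝ (Fin d)}
    (he : ‖e‖ = 1) {τ : ℝ} (hτ : 0 ≤ τ) {A : Set (UnitSphere d)}
    (hA : MeasurableSet A) :
    ((sphereMeasure d).prod (sphereMeasure d)).real {z | z.1 ∈ A ∧ dist z.1 z.2 ≤ τ} =
      (sphereMeasure d).real A * (sphereMeasure d).real (sphericalCap e (1 - τ ^ 2 / 2)) := by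
  have hmeas : MeasurableSet {z : UnitSphere d × UnitSphere d | z.1 ∈ A ∧ dist z.1 z.2 ≤ τ} :=
    (measurable_fst hA).inter (measurableSet_le measurable_dist measurable_const)
  have hslice (u : UnitSphere d) :
      sphereMeasure d (Prod.mk u ⁻¹' {z | z.1 ∈ A ∧ dist z.1 z.2 ≤ τ}) =
        A.indicator (fun _ ↦ sphereMeasure d (sphericalCap e (1 - τ ^ 2 / 2))) u := by
    by_cases hu : u ∈ A
    · rw [Set.indicator_of_mem hu,
        measure_sphericalCap_eq (he.trans (norm_eq_of_mem_sphere u).symm)]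
      congr 1
      ext v
      simp [hu, sphericalCap, dist_le_iff_le_inner hτ]
    · simp [hu]
  simp_rw [measureReal_def, Measure.prod_apply hmeas, hslice]
  rw [lintegral_indicator_const hA, mul_comm, ENNReal.toReal_mul]

/-- The polarization of the sphere by the mirror exchanging `x` and `y`, with `x` on the positive
side. -/
def mirrorPolarization {x y : EuclideanSpace ℝ (Fin d)} (hxy : x ≠ y) :
    Polarization (sphereMeasure d) where
  refl := sphereMap (mirror x y)
  height v := inner ℝ (x - y) v
  involutive v := Subtype.ext (mirror_mirror x y v)
  isometry := isometry_sphereMap _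
  measurePreserving := measurePreserving_sphereMap _
  height_refl v := inner_sub_mirror hxy v
  dist_le_dist_refl _ _ := dist_le_dist_sphereMap_mirror

lemma polarizableAlong_inner (e : EuclideanSpace ℝ (Fin d)) :
    PolarizableAlong (sphereMeasure d) fun v ↦ inner ℝ e v := by
  intro x y hlt
  have hne : (x : EuclideanSpace ℝ (Fin d)) ≠ y := by
    intro h
    simp only [h, lt_self_iff_false] at hlt
  have hnorm : ‖(x : EuclideanSpace ℝ (Fin d))‖ = ‖(y : EuclideanSpace ℝ (Fin d))‖ := by simp
  exact ⟨mirrorPolarization hne, Subtype.ext (mirror_apply_left hnorm),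
    inner_sub_left_pos hne hnorm.ge, fun _ ↦ inner_mirror_lt hlt⟩

end SphereMeasure

/-! ### Concentration of a cap on its boundary -/

section AxialStretch

open Metric Module

variable {E : Type*} [NormedAddCommGroup E] [InnerProductSpace ℝ E] {e x : E} {a b p q t : ℝ}

open scoped Pointwise in
lemma Ioo_smul_image_sphericalCap (e : E) (t : ℝ) :
    Set.Ioo (0 : ℝ) 1 • ((↑) '' sphericalCap e t : Set E) =
      {x | x ≠ 0 ∧ ‖x‖ < 1 ∧ t * ‖x‖ ≤ inner ℝ e x} := by
  ext x
  constructor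
  · rintro ⟨r, ⟨hr₀, hr₁⟩, _, ⟨v, hv, rfl⟩, rfl⟩
    have hnorm : ‖r • (v : E)‖ = r := by simp [norm_smul, abs_of_pos hr₀]
    refine ⟨norm_pos_iff.1 (hnorm.symm ▸ hr₀), hnorm.trans_lt hr₁, ?_⟩
    rw [hnorm, real_inner_smul_right, mul_comm]
    exact mul_le_mul_of_nonneg_left hv hr₀.le
  · rintro ⟨hx₀, hx₁, hx⟩
    have hpos : 0 < ‖x‖ := norm_pos_iff.2 hx₀
    refine ⟨‖x‖, ⟨hpos, hx₁⟩, ‖x‖⁻¹ • x,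
      ⟨⟨‖x‖⁻¹ • x, by simp [norm_smul, hpos.ne']⟩, ?_, rfl⟩, smul_inv_smul₀ hpos.ne' x⟩
    change t ≤ inner ℝ e (‖x‖⁻¹ • x)
    rwa [real_inner_smul_right, inv_mul_eq_div, le_div_iff₀ hpos]

/-- For a unit vector `e`, the linear map scaling the line through `e` by `p` and its orthogonal
complement by `q`. -/
def axialStretch (e : E) (p q : ℝ) : E →ₗ[ℝ] E :=
  q • LinearMap.id + (p - q) • (innerₗ E e).smulRight e

lemma axialStretch_apply (e : E) (p q : ℝ) (x : E) :
    axialStretch e p q x = q • x + ((p - q) * inner ℝ e x) • e := by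
  simp [axialStretch, mul_smul]

lemma inner_axialStretch (he : ‖e‖ = 1) : inner ℝ e (axialStretch e p q x) = p * inner ℝ e x := by
  rw [axialStretch_apply, inner_add_right, real_inner_smul_right, real_inner_smul_right,
    real_inner_self_eq_norm_sq, he]
  ring

lemma norm_axialStretch_sq (he : ‖e‖ = 1) : ‖axialStretch e p q x‖ ^ 2 =
    q ^ 2 * (‖x‖ ^ 2 - inner ℝ e x ^ 2) + p ^ 2 * inner ℝ e x ^ 2 := by
  rw [axialStretch_apply, norm_add_sq_real, norm_smul, norm_smul, real_inner_smul_left,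
    real_inner_smul_right, real_inner_comm e x, mul_pow, mul_pow, he, norm_eq_abs, norm_eq_abs,
    sq_abs, sq_abs]
  ring

lemma det_axialStretch [FiniteDimensional ℝ E] (he : ‖e‖ = 1) (hq : q ≠ 0) :
    LinearMap.det (axialStretch e p q) = p * q ^ (finrank ℝ E - 1) := by
  have : Nontrivial E := ⟨e, 0, norm_ne_zero_iff.1 (by simp [he])⟩
  have htrans : axialStretch e p q =
      q • LinearMap.transvection (innerₗ E e) ((p / q - 1) • e) := by
    ext x
    rw [axialStretch_apply, LinearMap.smul_apply, LinearMap.transvection.apply, innerₗ_apply_apply,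
      smul_add, smul_smul, smul_smul]
    congr 2
    field_simp
  rw [htrans, LinearMap.det_smul, LinearMap.transvection.det, innerₗ_apply_apply,
    real_inner_smul_right, real_inner_self_eq_norm_sq, he, ← Nat.sub_one_add_one finrank_pos.ne',
    pow_succ, Nat.add_sub_cancel]
  field_simp
  ring

lemma axialStretch_mem_cone (he : ‖e‖ = 1) (hp : 0 < p) (hb : 0 < b) (hpq : p ^ 2 ≤ q ^ 2)
    (hpb : p * b = a) (hq : q ^ 2 * (1 - b ^ 2) = 1 - a ^ 2)
    (hx : x ∈ {x | x ≠ 0 ∧ ‖x‖ < 1 ∧ b * ‖x‖ ≤ inner ℝ e x}) :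
    axialStretch e p q x ∈ {x | x ≠ 0 ∧ ‖x‖ < 1 ∧ a * ‖x‖ ≤ inner ℝ e x} := by
  obtain ⟨hx₀, hx₁, hxb⟩ := hx
  have hs : 0 < inner ℝ e x := (mul_pos hb (norm_pos_iff.2 hx₀)).trans_le hxb
  have hsq : 0 ≤ inner ℝ e x ^ 2 - b ^ 2 * ‖x‖ ^ 2 := by
    rw [sub_nonneg, ← mul_pow]
    gcongr
  refine ⟨fun h ↦ ?_, lt_of_le_of_lt ?_ hx₁, ?_⟩
  · have := inner_axialStretch (p := p) (q := q) (x := x) he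
    rw [h, inner_zero_right] at this
    exact (mul_pos hp hs).ne this
  · rw [← sq_le_sq₀ (norm_nonneg _) (norm_nonneg _), norm_axialStretch_sq he, ← sub_nonneg]
    calc 0 ≤ (q ^ 2 - p ^ 2) * (inner ℝ e x ^ 2 - b ^ 2 * ‖x‖ ^ 2) :=
          mul_nonneg (sub_nonneg.2 hpq) hsq
      _ = _ := by
        subst hpb
        linear_combination ‖x‖ ^ 2 * hq
  · rw [inner_axialStretch he]
    refine le_of_sq_le_sq ?_ (mul_pos hp hs).le
    rw [mul_pow, norm_axialStretch_sq he, ← sub_nonneg]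
    calc 0 ≤ p ^ 2 * q ^ 2 * (inner ℝ e x ^ 2 - b ^ 2 * ‖x‖ ^ 2) := by positivity
      _ = _ := by
        subst hpb
        linear_combination p ^ 2 * inner ℝ e x ^ 2 * hq

variable [FiniteDimensional ℝ E] [MeasurableSpace E] [BorelSpace E]

-- An axial stretch carries the cone over the smaller cap into the cone over the larger one, and its
-- determinant grows exponentially with the dimension.
lemma mul_toSphere_sphericalCap_le (he : ‖e‖ = 1) (ha : 0 < a) (hab : a < b) (hb : b < 1) :
    ENNReal.ofReal (a / b * √((1 - a ^ 2) / (1 - b ^ 2)) ^ (finrank ℝ E - 1)) *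
      (volume : Measure E).toSphere (sphericalCap e b) ≤
        (volume : Measure E).toSphere (sphericalCap e a) := by
  have hb₀ : 0 < b := ha.trans hab
  have hb₂ : 0 < 1 - b ^ 2 := by nlinarith
  have hle : 1 - b ^ 2 ≤ 1 - a ^ 2 := by gcongr
  have hq₁ : 1 ≤ √((1 - a ^ 2) / (1 - b ^ 2)) := one_le_sqrt.2 ((one_le_div hb₂).2 hle)
  have hq : √((1 - a ^ 2) / (1 - b ^ 2)) ^ 2 * (1 - b ^ 2) = 1 - a ^ 2 := by
    rw [sq_sqrt (div_nonneg (hb₂.le.trans hle) hb₂.le), div_mul_cancel₀ _ hb₂.ne']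
  set q := √((1 - a ^ 2) / (1 - b ^ 2))
  have hpq : (a / b) ^ 2 ≤ q ^ 2 := by
    gcongr
    exact ((div_le_one hb₀).2 hab.le).trans hq₁
  have hdet : |LinearMap.det (axialStretch e (a / b) q)| = a / b * q ^ (finrank ℝ E - 1) := by
    rw [det_axialStretch he (zero_lt_one.trans_le hq₁).ne', abs_of_nonneg (by positivity)]
  rw [Measure.toSphere_apply' _ (isClosed_sphericalCap e b).measurableSet,
    Measure.toSphere_apply' _ (isClosed_sphericalCap e a).measurableSet,
    Ioo_smul_image_sphericalCap, Ioo_smul_image_sphericalCap, mul_left_comm, ← hdet,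
    ← Measure.addHaar_image_linearMap]
  gcongr
  exact Set.image_subset_iff.2 fun x ↦
    axialStretch_mem_cone he (by positivity) hb₀ hpq (div_mul_cancel₀ a hb₀.ne') hq

end AxialStretch

section Concentration

open Filter

variable {a b : ℝ}

lemma mul_measureReal_sphericalCap_le {d : ℕ} [NeZero d] {e : EuclideanSpace ℝ (Fin d)}
    (he : ‖e‖ = 1) (ha : 0 < a) (hab : a < b) (hb : b < 1) :
    a / b * √((1 - a ^ 2) / (1 - b ^ 2)) ^ (d - 1) * (sphereMeasure d).real (sphericalCap e b) ≤
      (sphereMeasure d).real (sphericalCap e a) := by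
  have hb₀ : 0 < b := ha.trans hab
  have h := mul_toSphere_sphericalCap_le he ha hab hb
  rw [finrank_euclideanSpace_fin] at h
  rw [measureReal_def, measureReal_def, ← ENNReal.toReal_ofReal (mul_nonneg
    (div_nonneg ha.le hb₀.le) (pow_nonneg (sqrt_nonneg _) (d - 1))), ← ENNReal.toReal_mul]
  refine ENNReal.toReal_mono (measure_ne_top _ _) ?_
  rw [sphereMeasure, Measure.smul_apply, Measure.smul_apply, smul_eq_mul, smul_eq_mul,
    mul_left_comm]
  gcongr

lemma eventually_measureReal_sphericalCap_le_mul_of_pos (ha : 0 < a) (hab : a < b) (hb : b < 1)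
    {ε : ℝ} (hε : 0 < ε) :
    ∀ᶠ d in atTop, ∀ e : EuclideanSpace ℝ (Fin d), ‖e‖ = 1 →
      (sphereMeasure d).real (sphericalCap e b) ≤
        ε * (sphereMeasure d).real (sphericalCap e a) := by
  have hb₀ : 0 < b := ha.trans hab
  have hb₂ : 0 < 1 - b ^ 2 := by nlinarith
  have hq : 1 < √((1 - a ^ 2) / (1 - b ^ 2)) :=
    lt_sqrt_of_sq_lt (by rw [one_pow, one_lt_div hb₂]; gcongr)
  have hlim : Tendsto (fun d : ℕ ↦ ε * (a / b * √((1 - a ^ 2) / (1 - b ^ 2)) ^ (d - 1)))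
      atTop atTop :=
    (((tendsto_pow_atTop_atTop_of_one_lt hq).comp (tendsto_sub_atTop_nat 1)).const_mul_atTop
      (div_pos ha hb₀)).const_mul_atTop hε
  filter_upwards [hlim.eventually_ge_atTop 1, eventually_gt_atTop 0] with d hd hd₀ e he
  have : NeZero d := ⟨hd₀.ne'⟩
  calc (sphereMeasure d).real (sphericalCap e b)
      ≤ ε * (a / b * √((1 - a ^ 2) / (1 - b ^ 2)) ^ (d - 1)) *
          (sphereMeasure d).real (sphericalCap e b) := le_mul_of_one_le_left measureReal_nonneg hd
    _ ≤ ε * (sphereMeasure d).real (sphericalCap e a) := by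
        rw [mul_assoc]
        exact mul_le_mul_of_nonneg_left (mul_measureReal_sphericalCap_le he ha hab hb) hε.le

theorem eventually_measureReal_sphericalCap_le_mul (ha : a < 1) (hb : 0 < b) (hab : a < b)
    {ε : ℝ} (hε : 0 < ε) :
    ∀ᶠ d in atTop, ∀ e : EuclideanSpace ℝ (Fin d), ‖e‖ = 1 →
      (sphereMeasure d).real (sphericalCap e b) ≤
        ε * (sphereMeasure d).real (sphericalCap e a) := by
  obtain ⟨a', haa', ha'⟩ := exists_between (max_lt (lt_min hab ha) (lt_min hb one_pos))
  obtain ⟨b', hab', hb'⟩ := exists_between ha'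
  rw [max_lt_iff] at haa'
  rw [lt_min_iff] at hb'
  filter_upwards [eventually_measureReal_sphericalCap_le_mul_of_pos haa'.2 hab' hb'.2 hε,
    eventually_gt_atTop 0] with d hd hd₀ e he
  have : NeZero d := ⟨hd₀.ne'⟩
  calc (sphereMeasure d).real (sphericalCap e b)
      ≤ (sphereMeasure d).real (sphericalCap e b') :=
        measureReal_mono (antitone_sphericalCap e hb'.1.le)
    _ ≤ ε * (sphereMeasure d).real (sphericalCap e a') := hd e he
    _ ≤ ε * (sphereMeasure d).real (sphericalCap e a) := by
        gcongr ε * ?_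
        exact measureReal_mono (antitone_sphericalCap e haa'.1.le)

end Concentration

/-! ### Correlated Gaussians -/

local notation "γ" => gaussianReal 0 1

section StdGaussian

variable {E : Type*} [NormedAddCommGroup E] [InnerProductSpace ℝ E]

lemma inner_sq_le_one {u v : E} (hu : ‖u‖ = 1) (hv : ‖v‖ = 1) : (inner ℝ u v) ^ 2 ≤ 1 := by
  have h := abs_real_inner_le_norm u v
  rw [hu, hv, mul_one] at h
  exact (sq_le_one_iff_abs_le_one _).2 h

variable [FiniteDimensional ℝ E] [MeasurableSpace E] [BorelSpace E]

lemma hasLaw_inner_stdGaussian (w : E) :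
    HasLaw (fun g ↦ inner ℝ w g) (gaussianReal 0 (‖w‖ ^ 2).toNNReal) (stdGaussian E) where
  aemeasurable := by fun_prop
  map_eq := by
    have h := IsGaussian.map_eq_gaussianReal (μ := stdGaussian E) (innerSL ℝ w)
    rwa [integral_strongDual_stdGaussian, variance_dual_stdGaussian, innerSL_apply_norm] at h

lemma hasLaw_inner_stdGaussian_of_norm_eq_one {u : E} (hu : ‖u‖ = 1) :
    HasLaw (fun g ↦ inner ℝ u g) γ (stdGaussian E) := by
  simpa [hu] using hasLaw_inner_stdGaussian u

lemma hasLaw_linear_prod_gaussianReal (a b : ℝ) :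
    HasLaw (fun z : ℝ × ℝ ↦ a * z.1 + b * z.2) (gaussianReal 0 (a ^ 2 + b ^ 2).toNNReal)
      (Measure.prod γ γ) where
  aemeasurable := by fun_prop
  map_eq := by
    have hX := (gaussianReal_const_mul (P := γ) .id a).comp
      (measurePreserving_fst (μ := γ) (ν := γ)).hasLaw
    have hY := (gaussianReal_const_mul (P := γ) .id b).comp
      (measurePreserving_snd (μ := γ) (ν := γ)).hasLaw
    refine (gaussianReal_add_gaussianReal_of_indepFun
      (indepFun_prod (by fun_prop) (by fun_prop)) hX.map_eq hY.map_eq).trans ?_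
    congr 1
    · ring
    · ext
      simp [Real.coe_toNNReal _ (add_nonneg (sq_nonneg a) (sq_nonneg b))]

lemma hasLaw_correlated {ρ : ℝ} (hρ : ρ ^ 2 ≤ 1) :
    HasLaw (fun z : ℝ × ℝ ↦ ρ * z.1 + √(1 - ρ ^ 2) * z.2) γ (Measure.prod γ γ) := by
  have h := hasLaw_linear_prod_gaussianReal ρ √(1 - ρ ^ 2)
  rwa [sq_sqrt (sub_nonneg.2 hρ), add_sub_cancel, toNNReal_one] at h

-- By the Cramér–Wold device, it suffices to compare the laws of all linear combinations.
lemma hasLaw_inner_prodMk_inner_stdGaussian {u v : E} (hu : ‖u‖ = 1) (hv : ‖v‖ = 1) :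
    HasLaw (fun g ↦ (inner ℝ u g, inner ℝ v g))
      ((Measure.prod γ γ).map
        fun z ↦ (z.1, inner ℝ u v * z.1 + √(1 - (inner ℝ u v) ^ 2) * z.2))
      (stdGaussian E) where
  aemeasurable := by fun_prop
  map_eq := by
    set ρ := inner ℝ u v with hρ
    have : IsProbabilityMeasure ((stdGaussian E).map fun g ↦ (inner ℝ u g, inner ℝ v g)) :=
      Measure.isProbabilityMeasure_map (by fun_prop)
    have : IsProbabilityMeasure
        ((Measure.prod γ γ).map fun z ↦ (z.1, ρ * z.1 + √(1 - ρ ^ 2) * z.2)) :=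
      Measure.isProbabilityMeasure_map (by fun_prop)
    refine Measure.ext_of_charFunDual (funext fun L ↦ ?_)
    set a := L (1, 0)
    set b := L (0, 1)
    have hL (x y : ℝ) : L (x, y) = x * a + y * b := by
      rw [show ((x, y) : ℝ × ℝ) = x • (1, 0) + y • (0, 1) by simp, map_add, map_smul, map_smul,
        smul_eq_mul, smul_eq_mul]
    have hinner : (⇑L ∘ fun g ↦ (inner ℝ u g, inner ℝ v g)) =
        fun g ↦ inner ℝ (a • u + b • v) g := by
      ext g
      simp only [Function.comp_apply, hL, inner_add_left, real_inner_smul_left]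
      ring
    have hplane : (⇑L ∘ fun z : ℝ × ℝ ↦ (z.1, ρ * z.1 + √(1 - ρ ^ 2) * z.2)) =
        fun z ↦ (a + b * ρ) * z.1 + b * √(1 - ρ ^ 2) * z.2 := by
      ext z
      simp only [Function.comp_apply, hL]
      ring
    have hvar : ‖a • u + b • v‖ ^ 2 = (a + b * ρ) ^ 2 + (b * √(1 - ρ ^ 2)) ^ 2 := by
      rw [norm_add_sq_real, norm_smul, norm_smul, hu, hv, real_inner_smul_left,
        real_inner_smul_right, mul_pow b, sq_sqrt (sub_nonneg.2 (inner_sq_le_one hu hv)), ← hρ,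
        mul_one, mul_one, norm_eq_abs, norm_eq_abs, sq_abs, sq_abs]
      ring
    rw [charFunDual_eq_charFun_map_one, charFunDual_eq_charFun_map_one,
      Measure.map_map (by fun_prop) (by fun_prop), Measure.map_map (by fun_prop) (by fun_prop),
      hinner, hplane, (hasLaw_inner_stdGaussian _).map_eq,
      (hasLaw_linear_prod_gaussianReal _ _).map_eq, hvar]

/-- The probability that two standard Gaussian variables with correlation `ρ` are both at
least `η`. -/
def gaussPairTail (ρ η : ℝ) : ℝ :=
  (Measure.prod γ γ).real {z | η ≤ z.1 ∧ η ≤ ρ * z.1 + √(1 - ρ ^ 2) * z.2}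

lemma gaussPairTail_mem_Icc (ρ η : ℝ) : gaussPairTail ρ η ∈ Set.Icc 0 1 :=
  ⟨measureReal_nonneg, measureReal_le_one⟩

lemma measureReal_stdGaussian_inner {u : E} (hu : ‖u‖ = 1) (η : ℝ) :
    (stdGaussian E).real {g | η ≤ inner ℝ u g} = gaussTail η :=
  (hasLaw_inner_stdGaussian_of_norm_eq_one hu).measureReal_eq measurableSet_Ici

lemma measureReal_stdGaussian_inner_and_inner {u v : E} (hu : ‖u‖ = 1) (hv : ‖v‖ = 1) (η : ℝ) :
    (stdGaussian E).real {g | η ≤ inner ℝ u g ∧ η ≤ inner ℝ v g} =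
      gaussPairTail (inner ℝ u v) η := by
  have hη : MeasurableSet {z : ℝ × ℝ | η ≤ z.1 ∧ η ≤ z.2} :=
    (measurableSet_le measurable_const measurable_fst).inter
      (measurableSet_le measurable_const measurable_snd)
  rw [(hasLaw_inner_prodMk_inner_stdGaussian hu hv).measureReal_eq hη,
    map_measureReal_apply (by fun_prop) hη]
  rfl

end StdGaussian

section Stability

lemma gaussianPDF_zero_one_le_one (x : ℝ) : gaussianPDF 0 1 x ≤ 1 := by
  rw [gaussianPDF, ENNReal.ofReal_le_one, gaussianPDFReal]
  refine mul_le_one₀ (inv_le_one_of_one_le₀ (one_le_sqrt.2 ?_)) (exp_pos _).le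
    (exp_le_one_iff.2 ?_)
  · simpa using by linarith [pi_gt_three]
  · exact div_nonpos_of_nonpos_of_nonneg (neg_nonpos.2 (sq_nonneg _)) (by simp)

lemma measureReal_gaussianReal_Icc_le {a b : ℝ} (hab : a ≤ b) :
    Measure.real γ (Set.Icc a b) ≤ b - a := by
  rw [measureReal_def]
  refine ENNReal.toReal_le_of_le_ofReal (sub_nonneg.2 hab) ?_
  rw [gaussianReal_apply _ one_ne_zero, ← volume_Icc, ← setLIntegral_one]
  exact lintegral_mono gaussianPDF_zero_one_le_one

lemma measureReal_gaussianReal_le_abs_le {M : ℝ} (hM : 0 < M) :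
    Measure.real γ {x | M ≤ |x|} ≤ 1 / M ^ 2 := by
  rw [measureReal_def]
  refine ENNReal.toReal_le_of_le_ofReal (by positivity) ?_
  simpa using meas_ge_le_variance_div_sq (memLp_id_gaussianReal (μ := 0) (v := 1) 2) hM

lemma exists_measureReal_le_abs_le {α : ℝ} (hα : 0 < α) :
    ∃ M > 0, Measure.real γ {x | M ≤ |x|} ≤ α := by
  refine ⟨√(1 / α), by positivity, (measureReal_gaussianReal_le_abs_le (by positivity)).trans ?_⟩
  rw [sq_sqrt (by positivity), one_div_one_div]

lemma gaussTail_antitone : Antitone gaussTail := fun _ _ hab ↦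
  measureReal_mono (Set.Ici_subset_Ici.2 hab)

lemma gaussTail_le_add {a b : ℝ} (hab : a ≤ b) : gaussTail a ≤ gaussTail b + (b - a) := by
  have hsub : Set.Ici a ⊆ Set.Ici b ∪ Set.Icc a b := fun x hx ↦
    (le_total b x).imp id fun hxb ↦ ⟨hx, hxb⟩
  exact (measureReal_mono hsub).trans ((measureReal_union_le _ _).trans
    (add_le_add_right (measureReal_gaussianReal_Icc_le hab) _))

variable {Ω : Type*} [MeasurableSpace Ω] {P : Measure Ω}

lemma measureReal_symmDiff_setOf_le {Z : Ω → ℝ} (hZ : HasLaw Z γ P) (a b : ℝ) :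
    P.real (symmDiff {ω | a ≤ Z ω} {ω | b ≤ Z ω}) = |gaussTail a - gaussTail b| := by
  wlog hab : a ≤ b generalizing a b
  · rw [symmDiff_comm, abs_sub_comm, this b a (le_of_not_ge hab)]
  have hsub : Set.Ici b ⊆ Set.Ici a := Set.Ici_subset_Ici.2 hab
  calc P.real {ω | Z ω ∈ symmDiff (Set.Ici a) (Set.Ici b)}
      = Measure.real γ (symmDiff (Set.Ici a) (Set.Ici b)) :=
        hZ.measureReal_eq (measurableSet_Ici.symmDiff measurableSet_Ici)
    _ = Measure.real γ (Set.Ici a) - Measure.real γ (Set.Ici b) := by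
        rw [symmDiff_of_ge hsub, measureReal_sdiff hsub measurableSet_Ici]
    _ = |gaussTail a - gaussTail b| := (abs_of_nonneg (sub_nonneg.2 (gaussTail_antitone hab))).symm

lemma measureReal_symmDiff_setOf_le_le {Z W : Ω → ℝ} (hZ : HasLaw Z γ P) {κ α : ℝ} (hκ : 0 ≤ κ)
    (hZW : P.real {ω | κ < |W ω - Z ω|} ≤ α) (η : ℝ) :
    P.real (symmDiff {ω | η ≤ Z ω} {ω | η ≤ W ω}) ≤ α + 2 * κ := by
  have := hZ.isProbabilityMeasure
  have hsub : symmDiff {ω | η ≤ Z ω} {ω | η ≤ W ω} ⊆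
      {ω | κ < |W ω - Z ω|} ∪ {ω | Z ω ∈ Set.Icc (η - κ) (η + κ)} := by
    intro ω hω
    refine or_iff_not_imp_left.2 fun hκω ↦ ?_
    rw [Set.mem_ofPred_eq, not_lt, abs_le] at hκω
    rcases hω with ⟨h₁, h₂⟩ | ⟨h₁, h₂⟩ <;>
      simp only [Set.mem_ofPred_eq, not_le] at h₁ h₂ <;>
      constructor <;> linarith [hκω.1, hκω.2]
  calc P.real (symmDiff {ω | η ≤ Z ω} {ω | η ≤ W ω})
      ≤ P.real {ω | κ < |W ω - Z ω|} + P.real {ω | Z ω ∈ Set.Icc (η - κ) (η + κ)} :=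
        (measureReal_mono hsub).trans (measureReal_union_le _ _)
    _ ≤ α + 2 * κ := by
        have hlaw : P.real {ω | Z ω ∈ Set.Icc (η - κ) (η + κ)} =
            Measure.real γ (Set.Icc (η - κ) (η + κ)) := hZ.measureReal_eq measurableSet_Icc
        have hIcc := measureReal_gaussianReal_Icc_le (a := η - κ) (b := η + κ) (by linarith)
        linarith

variable [IsFiniteMeasure P]

lemma measureReal_inter_le_add_symmDiff (A A' B B' : Set Ω) :
    P.real (A ∩ B) ≤ P.real (A' ∩ B') + (P.real (symmDiff A A') + P.real (symmDiff B B')) := by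
  have hsub : A ∩ B ⊆ A' ∩ B' ∪ (symmDiff A A' ∪ symmDiff B B') := by
    intro x hx
    by_cases hA : x ∈ A'
    · by_cases hB : x ∈ B'
      · exact .inl ⟨hA, hB⟩
      · exact .inr (.inr (.inl ⟨hx.2, hB⟩))
    · exact .inr (.inl (.inl ⟨hx.1, hA⟩))
  calc P.real (A ∩ B) ≤ _ := (measureReal_mono hsub).trans (measureReal_union_le _ _)
    _ ≤ _ := add_le_add_right (measureReal_union_le _ _) _

lemma abs_measureReal_setOf_and_sub_le (p p' q q' : Ω → Prop) :
    |P.real {ω | p ω ∧ q ω} - P.real {ω | p' ω ∧ q' ω}| ≤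
      P.real (symmDiff {ω | p ω} {ω | p' ω}) + P.real (symmDiff {ω | q ω} {ω | q' ω}) := by
  have h := measureReal_inter_le_add_symmDiff (P := P) {ω | p ω} {ω | p' ω} {ω | q ω} {ω | q' ω}
  have h' := measureReal_inter_le_add_symmDiff (P := P) {ω | p' ω} {ω | p ω} {ω | q' ω} {ω | q ω}
  rw [symmDiff_comm {ω | p' ω}, symmDiff_comm {ω | q' ω}] at h'
  simp only [Set.ofPred_and]
  exact abs_sub_le_iff.2 ⟨by linarith, by linarith⟩

lemma abs_gaussPairTail_sub_le {ρ : ℝ} (hρ : ρ ^ 2 ≤ 1) (a b : ℝ) :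
    |gaussPairTail ρ a - gaussPairTail ρ b| ≤ 2 * |gaussTail a - gaussTail b| := by
  unfold gaussPairTail
  refine (abs_measureReal_setOf_and_sub_le _ _ _ _).trans_eq ?_
  rw [measureReal_symmDiff_setOf_le measurePreserving_fst.hasLaw,
    measureReal_symmDiff_setOf_le (hasLaw_correlated hρ), two_mul]

lemma exists_forall_abs_gaussPairTail_sub_le {ρ α : ℝ} (hρ : ρ ^ 2 ≤ 1) (hα : 0 < α) :
    ∃ δ > 0, ∀ s, |s - ρ| ≤ δ → ∀ η, |gaussPairTail s η - gaussPairTail ρ η| ≤ α := by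
  obtain ⟨M, hM, hMα⟩ := exists_measureReal_le_abs_le (α := α / 4) (by positivity)
  have hsqrt : Continuous fun s : ℝ ↦ √(1 - s ^ 2) := by fun_prop
  obtain ⟨δ, hδ, hδρ⟩ := Metric.continuous_iff.1 hsqrt ρ (α / (8 * M)) (by positivity)
  refine ⟨min (δ / 2) (α / (8 * M)), by positivity, fun s hsρ η ↦ ?_⟩
  have h₁ : |s - ρ| ≤ α / (8 * M) := hsρ.trans (min_le_right _ _)
  have h₂ : |√(1 - s ^ 2) - √(1 - ρ ^ 2)| ≤ α / (8 * M) :=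
    (hδρ s ((hsρ.trans (min_le_left _ _)).trans_lt (half_lt_self hδ))).le
  have hsub : {z : ℝ × ℝ | α / 4 < |s * z.1 + √(1 - s ^ 2) * z.2 -
      (ρ * z.1 + √(1 - ρ ^ 2) * z.2)|} ⊆ {z | M ≤ |z.1|} ∪ {z | M ≤ |z.2|} := by
    intro z hz
    by_contra! hM'
    simp only [Set.mem_union, Set.mem_ofPred_eq, not_or, not_le] at hM' hz
    refine hz.not_ge ?_
    calc _ = |(s - ρ) * z.1 + (√(1 - s ^ 2) - √(1 - ρ ^ 2)) * z.2| := by ring_nf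
      _ ≤ |s - ρ| * |z.1| + |√(1 - s ^ 2) - √(1 - ρ ^ 2)| * |z.2| := by
          simp_rw [← abs_mul]
          exact abs_add_le _ _
      _ ≤ α / (8 * M) * M + α / (8 * M) * M := by gcongr; exacts [hM'.1.le, hM'.2.le]
      _ = α / 4 := by field_simp; ring
  have hmeas : MeasurableSet {x : ℝ | M ≤ |x|} := measurableSet_le measurable_const (by fun_prop)
  have hdiff : (Measure.prod γ γ).real _ ≤ α / 4 + α / 4 :=
    (measureReal_mono hsub).trans <| (measureReal_union_le _ _).trans <| add_le_add
      ((measurePreserving_fst.hasLaw.measureReal_eq hmeas).trans_le hMα)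
      ((measurePreserving_snd.hasLaw.measureReal_eq hmeas).trans_le hMα)
  have hsymm := measureReal_symmDiff_setOf_le_le (hasLaw_correlated hρ) (by positivity) hdiff η
  unfold gaussPairTail
  refine (abs_measureReal_setOf_and_sub_le _ _ _ _).trans ?_
  rw [symmDiff_self, symmDiff_comm]
  simp only [Set.bot_eq_empty, measureReal_empty, zero_add]
  linarith

end Stability

/-! ### Gaussian vectors and caps -/

section NormConcentration

lemma memLp_sq_gaussianReal : MemLp (fun x : ℝ ↦ x ^ 2) 2 γ := by
  have h := (memLp_id_gaussianReal (μ := 0) (v := 1) 4).norm_rpow_div 2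
  have h42 : (4 / 2 : ENNReal) = 2 := by
    rw [show (4 : ENNReal) = 2 * 2 by norm_num]
    exact ENNReal.mul_div_cancel_right two_ne_zero ENNReal.ofNat_ne_top
  simpa [h42] using h

lemma integral_sq_gaussianReal : ∫ x, x ^ 2 ∂γ = 1 := by
  have h := variance_fun_id_gaussianReal (μ := 0) (v := 1)
  rwa [variance_of_integral_eq_zero (by fun_prop) (by simp)] at h

variable {ι : Type*} [Fintype ι]

lemma measurePreserving_toLp_stdGaussian :
    MeasurePreserving (WithLp.toLp 2) (Measure.pi fun _ : ι ↦ γ)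
      (stdGaussian (EuclideanSpace ℝ ι)) :=
  ⟨by fun_prop, map_pi_eq_stdGaussian⟩

lemma norm_sq_comp_toLp : (fun g : EuclideanSpace ℝ ι ↦ ‖g‖ ^ 2) ∘ WithLp.toLp 2 =
    ∑ i, fun ω : ι → ℝ ↦ ω i ^ 2 := by
  ext ω
  simp [EuclideanSpace.real_norm_sq_eq]

lemma memLp_sq_eval (i : ι) :
    MemLp (fun ω : ι → ℝ ↦ ω i ^ 2) 2 (Measure.pi fun _ ↦ γ) :=
  memLp_sq_gaussianReal.comp_measurePreserving (measurePreserving_eval _ i)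

lemma memLp_norm_sq_stdGaussian :
    MemLp (fun g ↦ ‖g‖ ^ 2) 2 (stdGaussian (EuclideanSpace ℝ ι)) := by
  rw [← measurePreserving_toLp_stdGaussian.map_eq,
    memLp_map_measure_iff (Continuous.aestronglyMeasurable (by fun_prop)) (by fun_prop),
    norm_sq_comp_toLp]
  exact memLp_finsetSum' _ fun i _ ↦ memLp_sq_eval i

lemma integral_norm_sq_stdGaussian :
    ∫ g, ‖g‖ ^ 2 ∂stdGaussian (EuclideanSpace ℝ ι) = Fintype.card ι := by
  have heval (i : ι) : ∫ ω : ι → ℝ, ω i ^ 2 ∂Measure.pi (fun _ ↦ γ) = 1 :=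
    (integral_comp_eval (μ := fun _ : ι ↦ γ) (f := fun x ↦ x ^ 2) (by fun_prop)).trans
      integral_sq_gaussianReal
  have hmeas : AEStronglyMeasurable (fun g : EuclideanSpace ℝ ι ↦ ‖g‖ ^ 2)
      ((Measure.pi fun _ ↦ γ).map (WithLp.toLp 2)) := by fun_prop
  rw [← measurePreserving_toLp_stdGaussian.map_eq, integral_map (by fun_prop) hmeas]
  simp_rw [EuclideanSpace.real_norm_sq_eq]
  rw [integral_finsetSum _ fun i _ ↦ (memLp_sq_eval i).integrable one_le_two]
  simp [heval]

lemma variance_norm_sq_stdGaussian :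
    Var[fun g ↦ ‖g‖ ^ 2; stdGaussian (EuclideanSpace ℝ ι)] =
      Fintype.card ι * Var[fun x : ℝ ↦ x ^ 2; γ] := by
  rw [← measurePreserving_toLp_stdGaussian.map_eq, variance_map (by fun_prop) (by fun_prop),
    norm_sq_comp_toLp, variance_sum_pi (X := fun _ x ↦ x ^ 2) fun _ ↦ memLp_sq_gaussianReal]
  simp

lemma measureReal_stdGaussian_le_abs_norm_sq_sub_le {c : ℝ} (hc : 0 < c) :
    (stdGaussian (EuclideanSpace ℝ ι)).real {g | c ≤ |‖g‖ ^ 2 - Fintype.card ι|} ≤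
      Fintype.card ι * Var[fun x : ℝ ↦ x ^ 2; γ] / c ^ 2 := by
  rw [measureReal_def]
  refine ENNReal.toReal_le_of_le_ofReal
    (div_nonneg (mul_nonneg (Nat.cast_nonneg _) (variance_nonneg _ _)) (sq_nonneg c)) ?_
  have h := meas_ge_le_variance_div_sq (memLp_norm_sq_stdGaussian (ι := ι)) hc
  rwa [integral_norm_sq_stdGaussian, variance_norm_sq_stdGaussian] at h

open Filter in
lemma eventually_measureReal_stdGaussian_norm_sq_le {θ α : ℝ} (hθ : 0 < θ) (hα : 0 < α) :
    ∀ᶠ d : ℕ in atTop,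
      (stdGaussian (EuclideanSpace ℝ (Fin d))).real {g | θ ≤ |(‖g‖ / √d) ^ 2 - 1|} ≤ α := by
  set V := Var[fun x : ℝ ↦ x ^ 2; γ]
  have hlim : Tendsto (fun d : ℕ ↦ V / θ ^ 2 / d) atTop (nhds 0) :=
    tendsto_const_div_atTop_nhds_zero_nat _
  filter_upwards [hlim.eventually_le_const hα, eventually_gt_atTop 0] with d hd hd₀
  have hd₀ : (0 : ℝ) < d := Nat.cast_pos.2 hd₀
  have hset : {g : EuclideanSpace ℝ (Fin d) | θ ≤ |(‖g‖ / √d) ^ 2 - 1|} =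
      {g | θ * d ≤ |‖g‖ ^ 2 - Fintype.card (Fin d)|} := by
    ext g
    rw [Set.mem_ofPred_eq, Set.mem_ofPred_eq, ← le_div_iff₀ hd₀, Fintype.card_fin]
    nth_rw 3 [← abs_of_pos hd₀]
    rw [← abs_div, sub_div, div_self hd₀.ne', div_pow, sq_sqrt hd₀.le]
  calc _ ≤ Fintype.card (Fin d) * V / (θ * d) ^ 2 := by
        rw [hset]
        exact measureReal_stdGaussian_le_abs_norm_sq_sub_le (by positivity)
    _ = V / θ ^ 2 / d := by rw [Fintype.card_fin]; field_simp
    _ ≤ α := hd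

lemma abs_inv_sub_one_le {r θ : ℝ} (hr : 0 ≤ r) (hθ : θ ≤ 1 / 2) (h : |r ^ 2 - 1| ≤ θ) :
    |r⁻¹ - 1| ≤ 2 * θ := by
  have hr₂ : 1 / 2 ≤ r := by nlinarith [(abs_le.1 h).1]
  have hr₀ : 0 < r := by linarith
  have hfactor : |r ^ 2 - 1| = |1 - r| * (1 + r) := by
    rw [abs_sub_comm, ← abs_of_pos (show 0 < 1 + r by linarith), ← abs_mul]
    ring_nf
  have hdiv : |r⁻¹ - 1| = |1 - r| / r := by
    rw [← abs_of_pos hr₀, ← abs_div, abs_of_pos hr₀, sub_div, div_self hr₀.ne', one_div]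
  rw [hdiv, div_le_iff₀ hr₀]
  nlinarith [abs_nonneg (1 - r), abs_nonneg (r ^ 2 - 1)]

end NormConcentration

section GaussianCap

open Filter Metric

lemma ae_ne_zero_stdGaussian {E : Type*} [NormedAddCommGroup E] [InnerProductSpace ℝ E]
    [FiniteDimensional ℝ E] [MeasurableSpace E] [BorelSpace E] [Nontrivial E] :
    ∀ᵐ g ∂stdGaussian E, g ≠ 0 := by
  obtain ⟨u, hu⟩ := exists_norm_eq E zero_le_one
  have := nullSingletonClass_gaussianReal (μ := 0) (v := 1) one_ne_zero
  filter_upwards [((hasLaw_inner_stdGaussian_of_norm_eq_one hu).ae_iff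
    (p := (· ≠ 0)) (by fun_prop)).2 (ae_iff.2 (by simp))] with g hg hg₀
  exact hg (by rw [hg₀, inner_zero_right])

lemma eventually_measureReal_lt_abs_inner_div_sub_le {κ α : ℝ} (hκ : 0 < κ) (hα : 0 < α) :
    ∀ᶠ d : ℕ in atTop, ∀ u : EuclideanSpace ℝ (Fin d), ‖u‖ = 1 →
      (stdGaussian (EuclideanSpace ℝ (Fin d))).real
        {g | κ < |(‖g‖ / √d)⁻¹ * inner ℝ u g - inner ℝ u g|} ≤ α := by
  obtain ⟨M, hM, hMα⟩ := exists_measureReal_le_abs_le (half_pos hα)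
  set θ := min (1 / 2) (κ / (2 * M))
  have hθ : 2 * θ * M ≤ κ := by
    have h : θ ≤ κ / (2 * M) := min_le_right _ _
    rw [le_div_iff₀ (by positivity)] at h
    linarith
  filter_upwards [eventually_measureReal_stdGaussian_norm_sq_le (θ := θ) (by positivity)
    (half_pos hα)] with d hd u hu
  have hsub : {g | κ < |(‖g‖ / √d)⁻¹ * inner ℝ u g - inner ℝ u g|} ⊆
      {g | M ≤ |inner ℝ u g|} ∪ {g | θ ≤ |(‖g‖ / √d) ^ 2 - 1|} := by
    intro g hg
    by_contra! hcon
    simp only [Set.mem_union, Set.mem_ofPred_eq, not_or, not_le] at hcon hg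
    refine hg.not_ge ?_
    calc |(‖g‖ / √d)⁻¹ * inner ℝ u g - inner ℝ u g|
        = |(‖g‖ / √d)⁻¹ - 1| * |inner ℝ u g| := by rw [← abs_mul, sub_mul, one_mul]
      _ ≤ 2 * θ * M := by
          gcongr
          exacts [abs_inv_sub_one_le (by positivity) (min_le_left _ _) hcon.2.le, hcon.1.le]
      _ ≤ κ := hθ
  have htail : (stdGaussian (EuclideanSpace ℝ (Fin d))).real {g | M ≤ |inner ℝ u g|} ≤ α / 2 :=
    ((hasLaw_inner_stdGaussian_of_norm_eq_one hu).measureReal_eq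
      (measurableSet_le measurable_const (by fun_prop))).trans_le hMα
  calc _ ≤ _ := (measureReal_mono hsub).trans (measureReal_union_le _ _)
    _ ≤ α / 2 + α / 2 := add_le_add htail hd
    _ = α := add_halves α

lemma eventually_measureReal_symmDiff_inner_le {α : ℝ} (hα : 0 < α) :
    ∀ᶠ d : ℕ in atTop, ∀ u : EuclideanSpace ℝ (Fin d), ‖u‖ = 1 → ∀ t : ℝ,
      (stdGaussian (EuclideanSpace ℝ (Fin d))).real
        (symmDiff {g | t * √d ≤ inner ℝ u g} {g | t * ‖g‖ ≤ inner ℝ u g}) ≤ α := by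
  filter_upwards [eventually_measureReal_lt_abs_inner_div_sub_le (κ := α / 4) (α := α / 2)
    (by positivity) (by positivity), eventually_gt_atTop 0] with d hd hd₀ u hu t
  have : NeZero d := ⟨hd₀.ne'⟩
  have hset : {g : EuclideanSpace ℝ (Fin d) | t * ‖g‖ ≤ inner ℝ u g}
      =ᵐ[stdGaussian (EuclideanSpace ℝ (Fin d))]
        {g | t * √d ≤ (‖g‖ / √d)⁻¹ * inner ℝ u g} := by
    filter_upwards [ae_ne_zero_stdGaussian] with g hg
    have hg₀ : 0 < ‖g‖ := norm_pos_iff.2 hg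
    have hd₁ : 0 < √(d : ℝ) := sqrt_pos.2 (Nat.cast_pos.2 hd₀)
    have hiff : t * ‖g‖ ≤ inner ℝ u g ↔ t * √d ≤ (‖g‖ / √d)⁻¹ * inner ℝ u g := by
      rw [le_inv_mul_iff₀ (div_pos hg₀ hd₁), show ‖g‖ / √d * (t * √d) = t * ‖g‖ by field_simp]
    exact propext hiff
  rw [measureReal_congr (EventuallyEq.rfl.symmDiff hset)]
  exact (measureReal_symmDiff_setOf_le_le (hasLaw_inner_stdGaussian_of_norm_eq_one hu)
    (by positivity) (hd u hu) _).trans_eq (by ring)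

lemma sphericalCap_inv_norm_smul {E : Type*} [NormedAddCommGroup E] [InnerProductSpace ℝ E]
    {g : E} (hg : g ≠ 0) (t : ℝ) :
    sphericalCap (‖g‖⁻¹ • g) t = {x : sphere (0 : E) 1 | t * ‖g‖ ≤ inner ℝ (x : E) g} := by
  ext x
  rw [sphericalCap, Set.mem_ofPred_eq, Set.mem_ofPred_eq, real_inner_smul_left, real_inner_comm,
    inv_mul_eq_div, le_div_iff₀ (norm_pos_iff.2 hg)]

lemma measureReal_prod_eq_integral {X Y : Type*} [MeasurableSpace X] [MeasurableSpace Y]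
    (μ : Measure X) (ν : Measure Y) [IsFiniteMeasure ν] {s : Set (X × Y)}
    (hs : MeasurableSet s) : (μ.prod ν).real s = ∫ x, ν.real (Prod.mk x ⁻¹' s) ∂μ := by
  rw [measureReal_def, Measure.prod_apply hs, ← integral_toReal
    (measurable_measure_prodMk_left hs).aemeasurable (.of_forall fun _ ↦ measure_lt_top _ _)]
  rfl

lemma measureReal_prod_eq_of_ae_eq {X Y : Type*} [MeasurableSpace X] [MeasurableSpace Y]
    (μ : Measure X) (ν : Measure Y) [IsFiniteMeasure μ] [IsProbabilityMeasure ν]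
    {s : Set (X × Y)} (hs : MeasurableSet s) {c : ℝ}
    (hc : ∀ᵐ y ∂ν, μ.real ((·, y) ⁻¹' s) = c) : (μ.prod ν).real s = c := by
  rw [← Measure.measurePreserving_swap.measureReal_preimage hs.nullMeasurableSet,
    measureReal_prod_eq_integral ν μ (measurable_swap hs)]
  exact (integral_congr_ae hc).trans (by simp)

lemma abs_sub_integral_le_of_slices {X Y : Type*} [MeasurableSpace X] [MeasurableSpace Y]
    {μ : Measure X} {ν : Measure Y} [IsFiniteMeasure μ] [IsProbabilityMeasure ν]
    {s : Set (X × Y)} (hs : MeasurableSet s) {c : ℝ}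
    (hc : ∀ᵐ y ∂ν, μ.real ((·, y) ⁻¹' s) = c) {f h : X → ℝ} (hf : Integrable f μ)
    (hh : Integrable h μ) (hfh : ∀ x, |ν.real (Prod.mk x ⁻¹' s) - f x| ≤ h x) :
    |c - ∫ x, f x ∂μ| ≤ ∫ x, h x ∂μ := by
  have hslice : Integrable (fun x ↦ ν.real (Prod.mk x ⁻¹' s)) μ :=
    Measure.integrable_measure_prodMk_left hs (measure_ne_top _ _)
  rw [← measureReal_prod_eq_of_ae_eq μ ν hs hc, measureReal_prod_eq_integral μ ν hs,
    ← integral_sub hslice hf, ← norm_eq_abs]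
  exact norm_integral_le_of_norm_le hh (.of_forall hfh)

lemma eventually_abs_measureReal_sphericalCap_sub_le {α : ℝ} (hα : 0 < α) :
    ∀ᶠ d : ℕ in atTop, ∀ e : EuclideanSpace ℝ (Fin d), ‖e‖ = 1 → ∀ t,
      |(sphereMeasure d).real (sphericalCap e t) - gaussTail (t * √d)| ≤ α := by
  filter_upwards [eventually_measureReal_symmDiff_inner_le hα, eventually_gt_atTop 0]
    with d hd hd₀ e he t
  have : NeZero d := ⟨hd₀.ne'⟩
  have hs : MeasurableSet
      {z : UnitSphere d × EuclideanSpace ℝ (Fin d) |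
        t * ‖z.2‖ ≤ inner ℝ (z.1 : EuclideanSpace ℝ (Fin d)) z.2} :=
    measurableSet_le (by fun_prop) (by fun_prop)
  have hslice : ∀ᵐ g ∂stdGaussian (EuclideanSpace ℝ (Fin d)),
      (sphereMeasure d).real {x | t * ‖g‖ ≤ inner ℝ (x : EuclideanSpace ℝ (Fin d)) g} =
        (sphereMeasure d).real (sphericalCap e t) := by
    filter_upwards [ae_ne_zero_stdGaussian] with g hg
    have hunit : ‖‖g‖⁻¹ • g‖ = ‖e‖ := by simp [norm_smul, hg, he]
    rw [← sphericalCap_inv_norm_smul hg, measureReal_def, measureReal_def,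
      measure_sphericalCap_eq hunit]
  have h := abs_sub_integral_le_of_slices hs hslice (integrable_const (gaussTail (t * √d)))
    (integrable_const α) fun u ↦ ?_
  · simpa using h
  · have hu := norm_eq_of_mem_sphere u
    have hmeas : MeasurableSet {g | t * √d ≤ inner ℝ (u : EuclideanSpace ℝ (Fin d)) g} :=
      measurableSet_le (by fun_prop) (by fun_prop)
    have hmeas' : MeasurableSet {g | t * ‖g‖ ≤ inner ℝ (u : EuclideanSpace ℝ (Fin d)) g} :=
      measurableSet_le (by fun_prop) (by fun_prop)
    rw [← measureReal_stdGaussian_inner hu, abs_sub_comm]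
    exact (abs_measureReal_sub_le_measureReal_symmDiff hmeas.nullMeasurableSet
      hmeas'.nullMeasurableSet).trans (hd u hu t)

end GaussianCap

/-! ### Collisions of caps -/

section CapCollisions

open Filter Metric

lemma abs_sub_indicator_le {X : Type*} {D D' : Set X} {F : X → ℝ} {b β : ℝ}
    (hF : ∀ z, F z ∈ Set.Icc 0 1) (hb : b ∈ Set.Icc 0 1) (hβ : 0 ≤ β) (hoff : ∀ z ∉ D, F z = 0)
    (hon : ∀ z ∈ D, z ∉ D' → |F z - b| ≤ β) (z : X) :
    |F z - D.indicator (fun _ ↦ b) z| ≤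
      D.indicator (fun _ ↦ β) z + D'.indicator (fun _ ↦ 1) z := by
  by_cases hz : z ∈ D
  · rw [Set.indicator_of_mem hz, Set.indicator_of_mem hz]
    by_cases hz' : z ∈ D'
    · rw [Set.indicator_of_mem hz']
      exact (abs_sub_le_of_nonneg_of_le (hF z).1 (hF z).2 hb.1 hb.2).trans
        (le_add_of_nonneg_left hβ)
    · rw [Set.indicator_of_notMem hz', add_zero]
      exact hon z hz hz'
  · rw [hoff z hz, Set.indicator_of_notMem hz, Set.indicator_of_notMem hz, sub_zero, abs_zero,
      zero_add]
    exact Set.indicator_nonneg (fun _ _ ↦ zero_le_one) z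

lemma abs_sub_measureReal_mul_le_of_slices {X Y : Type*} [MeasurableSpace X] [MeasurableSpace Y]
    {μ : Measure X} {ν : Measure Y} [IsFiniteMeasure μ] [IsProbabilityMeasure ν]
    {s : Set (X × Y)} (hs : MeasurableSet s) {c : ℝ}
    (hc : ∀ᵐ y ∂ν, μ.real ((·, y) ⁻¹' s) = c) {D D' : Set X} (hD : MeasurableSet D)
    (hD' : MeasurableSet D') {b β : ℝ} (hb : b ∈ Set.Icc 0 1) (hβ : 0 ≤ β)
    (hoff : ∀ x ∉ D, Prod.mk x ⁻¹' s = ∅)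
    (hon : ∀ x ∈ D, x ∉ D' → |ν.real (Prod.mk x ⁻¹' s) - b| ≤ β) :
    |c - μ.real D * b| ≤ μ.real D * β + μ.real D' := by
  have h := abs_sub_integral_le_of_slices hs hc ((integrable_const b).indicator hD)
    (((integrable_const β).indicator hD).add ((integrable_const 1).indicator hD'))
    (abs_sub_indicator_le (fun _ ↦ ⟨measureReal_nonneg, measureReal_le_one⟩) hb hβ
      (fun x hx ↦ by rw [hoff x hx, measureReal_empty]) hon)
  rwa [integral_add' ((integrable_const β).indicator hD) ((integrable_const 1).indicator hD'),
    integral_indicator_const _ hD, integral_indicator_const _ hD, integral_indicator_const _ hD',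
    smul_eq_mul, smul_eq_mul, smul_eq_mul, mul_one] at h

lemma eventually_abs_measureReal_inner_and_inner_sub_le {α : ℝ} (hα : 0 < α) :
    ∀ᶠ d : ℕ in atTop, ∀ u v : EuclideanSpace ℝ (Fin d), ‖u‖ = 1 → ‖v‖ = 1 → ∀ t : ℝ,
      |(stdGaussian (EuclideanSpace ℝ (Fin d))).real
          {g | t * ‖g‖ ≤ inner ℝ u g ∧ t * ‖g‖ ≤ inner ℝ v g} -
        gaussPairTail (inner ℝ u v) (t * √d)| ≤ α := by
  filter_upwards [eventually_measureReal_symmDiff_inner_le (half_pos hα)] with d hd u v hu hv t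
  rw [← measureReal_stdGaussian_inner_and_inner hu hv, abs_sub_comm]
  exact (abs_measureReal_setOf_and_sub_le _ _ _ _).trans
    ((add_le_add (hd u hu t) (hd v hv t)).trans_eq (add_halves α))

lemma exists_eventually_abs_measureReal_inner_and_inner_sub_le {ρ α : ℝ} (hρ : ρ ^ 2 ≤ 1)
    (hα : 0 < α) :
    ∃ δ > 0, ∀ᶠ d : ℕ in atTop, ∀ u v : EuclideanSpace ℝ (Fin d), ‖u‖ = 1 → ‖v‖ = 1 →
      |inner ℝ u v - ρ| ≤ δ → ∀ t : ℝ,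
        |(stdGaussian (EuclideanSpace ℝ (Fin d))).real
            {g | t * ‖g‖ ≤ inner ℝ u g ∧ t * ‖g‖ ≤ inner ℝ v g} -
          gaussPairTail ρ (t * √d)| ≤ α := by
  obtain ⟨δ, hδ, hρδ⟩ := exists_forall_abs_gaussPairTail_sub_le hρ (half_pos hα)
  refine ⟨δ, hδ, ?_⟩
  filter_upwards [eventually_abs_measureReal_inner_and_inner_sub_le (half_pos hα)]
    with d hd u v hu hv huv t
  calc _ ≤ _ := abs_sub_le _ (gaussPairTail (inner ℝ u v) (t * √d)) _
    _ ≤ α / 2 + α / 2 := add_le_add (hd u v hu hv t) (hρδ _ huv _)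
    _ = α := add_halves α

/-- The pairs of points of the unit sphere whose inner product is at least `s`. -/
def correlatedPairs (d : ℕ) (s : ℝ) : Set (UnitSphere d × UnitSphere d) :=
  {z | s ≤ inner ℝ (z.1 : EuclideanSpace ℝ (Fin d)) (z.2 : EuclideanSpace ℝ (Fin d))}

lemma measurableSet_correlatedPairs (d : ℕ) (s : ℝ) : MeasurableSet (correlatedPairs d s) :=
  measurableSet_le (by fun_prop) (by fun_prop)

variable {d : ℕ}

lemma measureReal_correlatedPairs [NeZero d] {e : EuclideanSpace ℝ (Fin d)} (he : ‖e‖ = 1)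
    (s : ℝ) : ((sphereMeasure d).prod (sphereMeasure d)).real (correlatedPairs d s) =
      (sphereMeasure d).real (sphericalCap e s) := by
  have hslice (u : UnitSphere d) : (sphereMeasure d).real (Prod.mk u ⁻¹' correlatedPairs d s) =
      (sphereMeasure d).real (sphericalCap e s) :=
    congrArg ENNReal.toReal (measure_sphericalCap_eq ((norm_eq_of_mem_sphere u).trans he.symm) s)
  simp [measureReal_prod_eq_integral _ _ (measurableSet_correlatedPairs d s), hslice]

lemma measureReal_closePairs_sphericalCap_eq [NeZero d] {a b : EuclideanSpace ℝ (Fin d)}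
    (hab : ‖a‖ = ‖b‖) (τ t : ℝ) :
    ((sphereMeasure d).prod (sphereMeasure d)).real (closePairs τ (sphericalCap a t)) =
      ((sphereMeasure d).prod (sphereMeasure d)).real (closePairs τ (sphericalCap b t)) := by
  have hdist (u v : UnitSphere d) :
      dist (sphereMap (mirror a b) u) (sphereMap (mirror a b) v) = dist u v :=
    (isometry_sphereMap (mirror a b)).dist_eq u v
  have hpre : Prod.map (sphereMap (mirror a b)) (sphereMap (mirror a b)) ⁻¹'
      closePairs τ (sphericalCap a t) = closePairs τ (sphericalCap b t) := by
    ext z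
    simp only [closePairs, sphericalCap, Set.preimage_ofPred_eq, Set.mem_ofPred_eq, Prod.map_fst,
      Prod.map_snd, hdist, coe_sphereMap, ← inner_mirror_left, mirror_apply_left hab]
  have hpres := measurePreserving_sphereMap (mirror a b)
  rw [← hpre, (hpres.prod hpres).measureReal_preimage
    (measurableSet_closePairs τ (isClosed_sphericalCap a t).measurableSet).nullMeasurableSet]

lemma closePairs_sphericalCap_inv_norm_smul {τ : ℝ} (hτ : 0 ≤ τ) {g : EuclideanSpace ℝ (Fin d)}
    (hg : g ≠ 0) (t : ℝ) : closePairs τ (sphericalCap (‖g‖⁻¹ • g) t) =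
      {z | z ∈ correlatedPairs d (1 - τ ^ 2 / 2) ∧
        t * ‖g‖ ≤ inner ℝ (z.1 : EuclideanSpace ℝ (Fin d)) g ∧
        t * ‖g‖ ≤ inner ℝ (z.2 : EuclideanSpace ℝ (Fin d)) g} := by
  ext z
  simp only [closePairs, correlatedPairs, sphericalCap_inv_norm_smul hg, Set.mem_ofPred_eq,
    dist_le_iff_le_inner hτ]
  tauto

-- Rotating the cap to a Gaussian direction `g`, its close pairs are averaged in two orders: for
-- fixed `g` they have constant measure, and for fixed `(u, v)` the projections `⟪u, g⟫` and
-- `⟪v, g⟫` are Gaussian with correlation `⟪u, v⟫`.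
lemma abs_measureReal_closePairs_sphericalCap_sub_le [NeZero d] {τ δ b β t : ℝ} (hτ : 0 ≤ τ)
    (hb : b ∈ Set.Icc 0 1) (hβ : 0 ≤ β)
    (hinner : ∀ u v : EuclideanSpace ℝ (Fin d), ‖u‖ = 1 → ‖v‖ = 1 →
      |inner ℝ u v - (1 - τ ^ 2 / 2)| ≤ δ →
        |(stdGaussian (EuclideanSpace ℝ (Fin d))).real
          {g | t * ‖g‖ ≤ inner ℝ u g ∧ t * ‖g‖ ≤ inner ℝ v g} - b| ≤ β)
    {e : EuclideanSpace ℝ (Fin d)} (he : ‖e‖ = 1) :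
    |((sphereMeasure d).prod (sphereMeasure d)).real (closePairs τ (sphericalCap e t)) -
        (sphereMeasure d).real (sphericalCap e (1 - τ ^ 2 / 2)) * b| ≤
      (sphereMeasure d).real (sphericalCap e (1 - τ ^ 2 / 2)) * β +
        (sphereMeasure d).real (sphericalCap e (1 - τ ^ 2 / 2 + δ)) := by
  set ρ := 1 - τ ^ 2 / 2
  have hs₁ : MeasurableSet {p : (UnitSphere d × UnitSphere d) × EuclideanSpace ℝ (Fin d) |
      t * ‖p.2‖ ≤ inner ℝ (p.1.1 : EuclideanSpace ℝ (Fin d)) p.2} :=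
    measurableSet_le (by fun_prop) (by fun_prop)
  have hs₂ : MeasurableSet {p : (UnitSphere d × UnitSphere d) × EuclideanSpace ℝ (Fin d) |
      t * ‖p.2‖ ≤ inner ℝ (p.1.2 : EuclideanSpace ℝ (Fin d)) p.2} :=
    measurableSet_le (by fun_prop) (by fun_prop)
  have hs : MeasurableSet {p : (UnitSphere d × UnitSphere d) × EuclideanSpace ℝ (Fin d) |
      p.1 ∈ correlatedPairs d ρ ∧
        t * ‖p.2‖ ≤ inner ℝ (p.1.1 : EuclideanSpace ℝ (Fin d)) p.2 ∧
        t * ‖p.2‖ ≤ inner ℝ (p.1.2 : EuclideanSpace ℝ (Fin d)) p.2} :=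
    (measurable_fst (measurableSet_correlatedPairs d ρ)).inter (hs₁.inter hs₂)
  rw [← measureReal_correlatedPairs he, ← measureReal_correlatedPairs he]
  refine abs_sub_measureReal_mul_le_of_slices (ν := stdGaussian (EuclideanSpace ℝ (Fin d))) hs ?_
    (measurableSet_correlatedPairs d ρ) (measurableSet_correlatedPairs d (ρ + δ)) hb hβ ?_ ?_
  · filter_upwards [ae_ne_zero_stdGaussian] with g hg
    have hunit : ‖‖g‖⁻¹ • g‖ = ‖e‖ := by simp [norm_smul, hg, he]
    rw [← measureReal_closePairs_sphericalCap_eq hunit,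
      closePairs_sphericalCap_inv_norm_smul hτ hg]
    rfl
  · intro z hz
    simp [hz]
  · intro z hz hz'
    have hz₁ : ρ ≤ inner ℝ (z.1 : EuclideanSpace ℝ (Fin d)) (z.2 : _) := hz
    have hz₂ : inner ℝ (z.1 : EuclideanSpace ℝ (Fin d)) (z.2 : _) < ρ + δ := not_le.1 hz'
    simpa [hz] using hinner z.1 z.2 (norm_eq_of_mem_sphere _) (norm_eq_of_mem_sphere _)
      (abs_sub_le_iff.2 ⟨by linarith, by linarith⟩)

theorem eventually_abs_measureReal_closePairs_sphericalCap_sub_le {τ : ℝ} (hτ₀ : 0 < τ)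
    (hτ : τ ≤ √2) {α : ℝ} (hα : 0 < α) :
    ∀ᶠ d : ℕ in atTop, ∀ e : EuclideanSpace ℝ (Fin d), ‖e‖ = 1 → ∀ t : ℝ,
      |((sphereMeasure d).prod (sphereMeasure d)).real (closePairs τ (sphericalCap e t)) -
          (sphereMeasure d).real (sphericalCap e (1 - τ ^ 2 / 2)) *
            gaussPairTail (1 - τ ^ 2 / 2) (t * √d)| ≤
        (sphereMeasure d).real (sphericalCap e (1 - τ ^ 2 / 2)) * α := by
  have hτ₂ : τ ^ 2 ≤ 2 := (le_sqrt hτ₀.le zero_le_two).1 hτ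
  have hτ₁ : 0 < τ ^ 2 := by positivity
  obtain ⟨δ, hδ, hinner⟩ := exists_eventually_abs_measureReal_inner_and_inner_sub_le
    (ρ := 1 - τ ^ 2 / 2) (by nlinarith) (half_pos hα)
  filter_upwards [hinner, eventually_gt_atTop 0, eventually_measureReal_sphericalCap_le_mul
    (a := 1 - τ ^ 2 / 2) (b := 1 - τ ^ 2 / 2 + δ) (by linarith) (by linarith) (by linarith)
    (half_pos hα)] with d hinner hd₀ hcap e he t
  have : NeZero d := ⟨hd₀.ne'⟩
  have h := abs_measureReal_closePairs_sphericalCap_sub_le hτ₀.le (gaussPairTail_mem_Icc _ _)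
    (half_pos hα).le (fun u v hu hv huv ↦ hinner u v hu hv huv t) he
  linarith [hcap e he]

end CapCollisions

/-! ### The collision bound -/

section CollisionBound

open Filter Metric

lemma lambdaFn_eq (τ η : ℝ) :
    lambdaFn τ η = gaussPairTail (1 - τ ^ 2 / 2) η / gaussTail η := by
  rw [lambdaFn, show τ ^ 2 - τ ^ 4 / 4 = 1 - (1 - τ ^ 2 / 2) ^ 2 by ring]
  rfl

variable {d : ℕ} {τ α η : ℝ} {e : EuclideanSpace ℝ (Fin d)}

lemma abs_measureReal_closePairs_sphericalCap_sub_le_of_gaussTail_eq (hτ₂ : τ ^ 2 ≤ 2) {t : ℝ}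
    (hcap : |(sphereMeasure d).real (sphericalCap e t) - gaussTail (t * √d)| ≤ α)
    (hpairs :
      |((sphereMeasure d).prod (sphereMeasure d)).real (closePairs τ (sphericalCap e t)) -
          (sphereMeasure d).real (sphericalCap e (1 - τ ^ 2 / 2)) *
            gaussPairTail (1 - τ ^ 2 / 2) (t * √d)| ≤
        (sphereMeasure d).real (sphericalCap e (1 - τ ^ 2 / 2)) * α)
    (hη : gaussTail η = (sphereMeasure d).real (sphericalCap e t)) :
    |((sphereMeasure d).prod (sphereMeasure d)).real (closePairs τ (sphericalCap e t)) -
        (sphereMeasure d).real (sphericalCap e (1 - τ ^ 2 / 2)) *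
          gaussPairTail (1 - τ ^ 2 / 2) η| ≤
      (sphereMeasure d).real (sphericalCap e (1 - τ ^ 2 / 2)) * (3 * α) := by
  set k := (sphereMeasure d).real (sphericalCap e (1 - τ ^ 2 / 2))
  have hpairTail : |gaussPairTail (1 - τ ^ 2 / 2) (t * √d) - gaussPairTail (1 - τ ^ 2 / 2) η| ≤
      2 * α := by
    rw [← hη, abs_sub_comm] at hcap
    exact (abs_gaussPairTail_sub_le (by nlinarith [sq_nonneg τ]) _ _).trans (by gcongr)
  calc _ ≤ _ := abs_sub_le _ (k * gaussPairTail (1 - τ ^ 2 / 2) (t * √d)) _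
    _ ≤ k * α + k * (2 * α) := by
      rw [← mul_sub k, abs_mul, abs_of_nonneg (measureReal_nonneg : 0 ≤ k)]
      gcongr
    _ = k * (3 * α) := by ring

variable [NeZero d]

lemma condCollision_eq (hτ : 0 ≤ τ) (he : ‖e‖ = 1) {A : Set (UnitSphere d)}
    (hA : MeasurableSet A) :
    condCollision d A τ = ((sphereMeasure d).prod (sphereMeasure d)).real (closePairs τ A) /
      ((sphereMeasure d).real A * (sphereMeasure d).real (sphericalCap e (1 - τ ^ 2 / 2))) := by
  rw [← measureReal_prod_setOf_fst_mem_and_dist_le he hτ hA]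
  rfl

lemma condCollision_sub_lambdaFn (hτ : 0 < τ) (he : ‖e‖ = 1) {A : Set (UnitSphere d)}
    (hA : MeasurableSet A) (hη : gaussTail η = (sphereMeasure d).real A) :
    condCollision d A τ - lambdaFn τ η =
      (((sphereMeasure d).prod (sphereMeasure d)).real (closePairs τ A) -
          (sphereMeasure d).real (sphericalCap e (1 - τ ^ 2 / 2)) *
            gaussPairTail (1 - τ ^ 2 / 2) η) /
        ((sphereMeasure d).real A * (sphereMeasure d).real (sphericalCap e (1 - τ ^ 2 / 2))) := by
  have hk : (sphereMeasure d).real (sphericalCap e (1 - τ ^ 2 / 2)) ≠ 0 :=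
    (measureReal_sphericalCap_pos he (by linarith [pow_pos hτ 2])).ne'
  rw [condCollision_eq hτ.le he hA, lambdaFn_eq, hη, sub_div, mul_comm (_ : ℝ) (gaussPairTail _ _),
    mul_div_mul_right _ _ hk]

lemma gaussTail_le_of_forall_gt {m : ℝ} (hα : 0 < α)
    (hcap : ∀ t : ℝ, |(sphereMeasure d).real (sphericalCap e t) - gaussTail (t * √d)| ≤ α)
    {t : ℝ} (ht : ∀ t' > t, (sphereMeasure d).real (sphericalCap e t') ≤ m) :
    gaussTail (t * √d) ≤ m + 2 * α := by
  have hd : 0 < √(d : ℝ) := sqrt_pos.2 (Nat.cast_pos.2 (NeZero.pos d))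
  have hshift : (t + α / √d) * √d = t * √d + α := by field_simp
  have hle : gaussTail (t * √d) ≤ gaussTail (t * √d + α) + (t * √d + α - t * √d) :=
    gaussTail_le_add (le_add_of_nonneg_right hα.le)
  have hcap' := abs_le.1 (hcap (t + α / √d))
  rw [hshift] at hcap'
  linarith [ht _ (lt_add_of_pos_right t (div_pos hα hd)), hcap'.1]

lemma measureReal_closePairs_le (hτ : 0 < τ) (hτ₂ : τ ^ 2 ≤ 2) (hα : 0 < α) (he : ‖e‖ = 1)
    (hcap : ∀ t : ℝ, |(sphereMeasure d).real (sphericalCap e t) - gaussTail (t * √d)| ≤ α)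
    (hpairs : ∀ t : ℝ,
      |((sphereMeasure d).prod (sphereMeasure d)).real (closePairs τ (sphericalCap e t)) -
          (sphereMeasure d).real (sphericalCap e (1 - τ ^ 2 / 2)) *
            gaussPairTail (1 - τ ^ 2 / 2) (t * √d)| ≤
        (sphereMeasure d).real (sphericalCap e (1 - τ ^ 2 / 2)) * α)
    {A : Set (UnitSphere d)} (hA : MeasurableSet A)
    (hη : gaussTail η = (sphereMeasure d).real A) :
    ((sphereMeasure d).prod (sphereMeasure d)).real (closePairs τ A) ≤
      (sphereMeasure d).real (sphericalCap e (1 - τ ^ 2 / 2)) *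
        (gaussPairTail (1 - τ ^ 2 / 2) η + 8 * α) := by
  have hτ₁ : 0 < τ ^ 2 := pow_pos hτ 2
  set k := (sphereMeasure d).real (sphericalCap e (1 - τ ^ 2 / 2))
  have hk : 0 < k := measureReal_sphericalCap_pos he (by linarith)
  have hkα : k * α ≤ α := mul_le_of_le_one_left hα.le measureReal_le_one
  obtain ⟨t, hgt, hle, hpairs_le⟩ := exists_superlevel_closePairs_le
    (continuous_const.inner continuous_subtype_val) (polarizableAlong_inner e) τ hA (mul_pos hk hα)
  have hηt : |gaussTail (t * √d) - gaussTail η| ≤ 3 * α := by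
    have hupper := gaussTail_le_of_forall_gt hα hcap hgt
    have hlower : (sphereMeasure d).real A ≤ (sphereMeasure d).real (sphericalCap e t) + k * α :=
      hle
    rw [hη, abs_le]
    constructor <;> linarith [(abs_le.1 (hcap t)).2]
  have hpairTail : gaussPairTail (1 - τ ^ 2 / 2) (t * √d) ≤
      gaussPairTail (1 - τ ^ 2 / 2) η + 6 * α := by
    linarith [le_of_abs_le (abs_gaussPairTail_sub_le (ρ := 1 - τ ^ 2 / 2) (by nlinarith)
      (t * √d) η)]
  calc _ ≤ _ := hpairs_le
    _ ≤ k * gaussPairTail (1 - τ ^ 2 / 2) (t * √d) + k * α + k * α :=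
      add_le_add_left (sub_le_iff_le_add'.1 (le_of_abs_le (hpairs t))) _
    _ ≤ k * (gaussPairTail (1 - τ ^ 2 / 2) η + 6 * α) + k * α + k * α := by gcongr
    _ = k * (gaussPairTail (1 - τ ^ 2 / 2) η + 8 * α) := by ring

theorem conditional_collision_upper_bound_general {τ c₀ ε : ℝ} (hτ₀ : 0 < τ) (hτ : τ ≤ √2)
    (hc₀ : 0 < c₀) (hε : 0 < ε) :
    ∀ᶠ d : ℕ in atTop, ∀ A : Set (UnitSphere d), MeasurableSet A →
      c₀ ≤ (sphereMeasure d).real A → ∀ η : ℝ, gaussTail η = (sphereMeasure d).real A →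
        condCollision d A τ ≤ lambdaFn τ η + ε ∧
          ∀ e : EuclideanSpace ℝ (Fin d), ‖e‖ = 1 → ∀ t : ℝ, A = sphericalCap e t →
            |condCollision d A τ - lambdaFn τ η| ≤ ε := by
  have hτ₂ : τ ^ 2 ≤ 2 := (le_sqrt hτ₀.le zero_le_two).1 hτ
  obtain ⟨α, hα, hαε⟩ : ∃ α > 0, 8 * α = ε * c₀ := ⟨ε * c₀ / 8, by positivity, by ring⟩
  filter_upwards [eventually_abs_measureReal_sphericalCap_sub_le hα, eventually_gt_atTop 0,
    eventually_abs_measureReal_closePairs_sphericalCap_sub_le hτ₀ hτ hα]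
    with d hcap hd hpairs A hA hc η hη
  have : NeZero d := ⟨hd.ne'⟩
  have hm : 0 < (sphereMeasure d).real A := hc₀.trans_le hc
  have hαm : 8 * α ≤ ε * (sphereMeasure d).real A := by rw [hαε]; gcongr
  have hk {e : EuclideanSpace ℝ (Fin d)} (he : ‖e‖ = 1) :
      0 < (sphereMeasure d).real (sphericalCap e (1 - τ ^ 2 / 2)) :=
    measureReal_sphericalCap_pos he (by linarith [pow_pos hτ₀ 2])
  constructor
  · have he : ‖EuclideanSpace.single (0 : Fin d) (1 : ℝ)‖ = 1 := by simp
    have h := measureReal_closePairs_le hτ₀ hτ₂ hα he (hcap _ he) (hpairs _ he) hA hη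
    rw [← sub_le_iff_le_add', condCollision_sub_lambdaFn hτ₀ he hA hη,
      div_le_iff₀ (mul_pos hm (hk he))]
    nlinarith [mul_le_mul_of_nonneg_left hαm (hk he).le]
  · rintro e he t rfl
    have h := abs_measureReal_closePairs_sphericalCap_sub_le_of_gaussTail_eq hτ₂ (hcap e he t)
      (hpairs e he t) hη
    rw [condCollision_sub_lambdaFn hτ₀ he hA hη, abs_div, abs_of_pos (mul_pos hm (hk he)),
      div_le_iff₀ (mul_pos hm (hk he))]
    nlinarith [mul_le_mul_of_nonneg_left hαm (hk he).le, mul_pos (hk he) hα]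

end CollisionBound

/-- For `0 < τ < √2`, `c₀ > 0`, `ε > 0`, there is `d₀` such that for all `d ≥ d₀` and all
measurable `A ⊆ S^{d-1}` with `c₀ ≤ μ(A) ≤ 1/2`,
`Pr[v ∈ A ∣ u ∈ A, ‖u - v‖ ≤ τ] ≤ Λ(τ, Φ_c⁻¹(μ(A))) + ε`, with equality up to `ε` when `A` is
a spherical cap. -/
theorem conditional_collision_upper_bound (τ c₀ ε : ℝ)
    (hτ0 : 0 < τ) (hτ : τ < Real.sqrt 2) (hc₀ : 0 < c₀) (hε : 0 < ε) :
    ∃ d₀ : ℕ, ∀ d : ℕ, ∀ hd : d₀ < d,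
      ∀ A : Set (Metric.sphere (0 : EuclideanSpace ℝ (Fin d)) 1), MeasurableSet A →
        c₀ ≤ (sphereMeasure d A).toReal → (sphereMeasure d A).toReal ≤ 1 / 2 →
        ∀ η : ℝ, gaussTail η = (sphereMeasure d A).toReal →
          condCollision d A τ ≤ lambdaFn τ η + ε ∧
            ((∃ t : ℝ,
                A = {u : Metric.sphere (0 : EuclideanSpace ℝ (Fin d)) 1 |
                  t ≤ (u : EuclideanSpace ℝ (Fin d))
                        ⟨0, Nat.lt_of_le_of_lt (Nat.zero_le d₀) hd⟩}) →
              |condCollision d A τ - lambdaFn τ η| ≤ ε) := by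
  obtain ⟨d₀, hd₀⟩ :=
    Filter.eventually_atTop.1 (conditional_collision_upper_bound_general hτ0 hτ.le hc₀ hε)
  refine ⟨d₀, fun d hd A hA hc _ η hη ↦ ?_⟩
  obtain ⟨hupper, hcap⟩ := hd₀ d hd.le A hA hc η hη
  refine ⟨hupper, fun ⟨t, ht⟩ ↦ hcap (EuclideanSpace.single ⟨0, d₀.zero_le.trans_lt hd⟩ 1)
    (by simp) t (ht.trans ?_)⟩
  simp only [sphericalCap, EuclideanSpace.inner_single_left, map_one, one_mul]
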